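/- arXiv:1608.04684 — 2 statements merged into one kernel-verified Lean document; each statement's English description precedes it below -/
import Mathlib

section
/- Let α ∈ ℝ, N ≥ 2, and let y_1,…,y_{N−2} ∈ ℝ² be arbitrary. Let 0 < R ≤ L/6, κ ∈ [0,1], and c(κ) := 4.7·10⁻⁴ κ/(1+2κ). Then for every u ∈ W^{1,2}([R,L], r dr): ∫_R^L ( |u'(r)|² + ρ(r) r^{-2} |u(r)|² ) r dr ≥ ∫_R^L ( (1−κ)|u'(r)|² + c(κ)² α_N² r^{-2} 1_{[3R, L−3R]}(r) |u(r)|² ) r dr. (Main radial bound, Theorem 4.1.) -/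
/-!
The potential `ρ` vanishes only where the flux `Φ̂` is an even integer, so the point is that the
flux cannot stay close to an even integer on a long interval.

*Regularity of the flux.* In polar coordinates the area of `B_r(0) ∩ B_R(y)` is the integral over
`s < r` of the arc length of the circle of radius `s` inside `B_R(y)`. This arc length obeys a
Harnack-type inequality (`arcLen_harnack`): on a window of length `R / 2` in `[R, ∞)`, its value at
an interior point is at most three times the sum of its values on either side. The property is
linear in the disks, so the increments of the flux inherit it (`Spread`, `spread_integral`). Hence
a monotone flux passing, within such a window, from near one even integer to near another spends
away from `2ℤ` at least as long as the shorter of its stays near these two integers (`gap_length`).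

*Long windows.* If the flux spends little time away from `2ℤ`, in each window of length `R / 2` a
single even integer dominates (`exists_dominant`, `window_const`), and overlapping windows share
it, so the flux is near one `2q` on most of an interval of length about `5 R` (`long_const`). This
is absurd (`far_large`): either some disk is entered and left inside that interval, and the flux
grows by `2|α| ≥ 2 α_N`, or at the middle every disk counts fully or not at all, the count is an
integer `p`, and `(2p+1)α` is at distance at least `α_N` from `2ℤ`. Therefore
`∫ ρ ≥ R α_N² / 1568` over every interval of length at least `5 R` (`rho_integral_lower`).

*Radial inequality.* On a window of length between `5 R` and `10 R`, the fundamental theorem of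
calculus and Cauchy–Schwarz turn this lower bound into a pointwise bound on `α_N² |u|²` by the
kinetic and the potential energy of the window (`sup_bound`, `window_bound`). The interval `[R, L]`
is a union of such windows, over which the inequality is summed.
-/

open MeasureTheory Real Set

noncomputable section

/-- The plane `ℝ²`. -/
abbrev Plane : Type := EuclideanSpace ℝ (Fin 2)

/-- `α_N := min_{p ∈ {0,…,N-2}} min_{q ∈ ℤ} |(2p+1)α - 2q|`. -/
def alphaN (α : ℝ) (N : ℕ) : ℝ :=
  sInf {t : ℝ | ∃ p : ℕ, p + 1 < N ∧ ∃ q : ℤ, t = |(2 * (p : ℝ) + 1) * α - 2 * (q : ℝ)|}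

/-- The particle counting function `𝒩(r) = Σ_l |B_r(0) ∩ B_R(y_l)| / (πR²)`. -/
def countN (R : ℝ) {m : ℕ} (y : Fin m → Plane) (r : ℝ) : ℝ :=
  ∑ l : Fin m, (volume (Metric.ball (0 : Plane) r ∩ Metric.ball (y l) R)).toReal / (π * R ^ 2)

/-- The effective coupling `ρ(r) = min_{q ∈ ℤ} |Φ̂(r) - 2q|²` where
`Φ̂(r) = α(1 + 2𝒩(r))` is the normalized flux. -/
def rhoFun (α R : ℝ) {m : ℕ} (y : Fin m → Plane) (r : ℝ) : ℝ :=
  sInf {t : ℝ | ∃ q : ℤ, t = (α * (1 + 2 * countN R y r) - 2 * q) ^ 2}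


/-! ### The disk in polar coordinates -/

/-- Angular slice at radius `s` of the disk of radius `R` centred at the point `d ≥ 0` of the
positive real axis: the angles `φ ∈ (-π, π)` for which `s e^{iφ}` lies in the disk. -/
def slice (R d s : ℝ) : Set ℝ :=
  {φ | φ ∈ Ioo (-π) π ∧ s ^ 2 + d ^ 2 - R ^ 2 < 2 * s * d * cos φ}

/-- Length of the arc of radius `s` centred at `0` inside the disk of radius `R` centred at `d`. -/
def arcLen (R d s : ℝ) : ℝ := s * (volume (slice R d s)).toReal

lemma volume_slice_le (R d s : ℝ) : volume (slice R d s) ≤ ENNReal.ofReal (2 * π) := by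
  calc volume (slice R d s) ≤ volume (Ioo (-π) π) := measure_mono fun φ h => h.1
    _ = _ := by rw [Real.volume_Ioo]; ring_nf

lemma volume_slice_ne_top (R d s : ℝ) : volume (slice R d s) ≠ ⊤ :=
  ((volume_slice_le R d s).trans_lt ENNReal.ofReal_lt_top).ne

lemma measurable_volume_slice (R d : ℝ) : Measurable fun s => volume (slice R d s) := by
  have hm : MeasurableSet {p : ℝ × ℝ | p.2 ∈ Ioo (-π) π ∧
      p.1 ^ 2 + d ^ 2 - R ^ 2 < 2 * p.1 * d * cos p.2} := by
    have h1 : MeasurableSet {p : ℝ × ℝ | p.1 ^ 2 + d ^ 2 - R ^ 2 < 2 * p.1 * d * cos p.2} :=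
      measurableSet_lt (by fun_prop) (by fun_prop)
    exact (measurable_snd measurableSet_Ioo).inter h1
  exact measurable_measure_prodMk_left hm

lemma measurable_arcLen (R d : ℝ) : Measurable (arcLen R d) :=
  measurable_id.mul (measurable_volume_slice R d).ennreal_toReal

lemma arcLen_nonneg (R d : ℝ) {s : ℝ} (hs : 0 ≤ s) : 0 ≤ arcLen R d s :=
  mul_nonneg hs ENNReal.toReal_nonneg

lemma arcLen_intervalIntegrable (R d a b : ℝ) :
    IntervalIntegrable (arcLen R d) volume a b := by
  have h : IntervalIntegrable (fun s : ℝ => |s| * (2 * π)) volume a b :=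
    (by fun_prop : Continuous fun s : ℝ => |s| * (2 * π)).intervalIntegrable _ _
  refine h.mono_fun (measurable_arcLen R d).aestronglyMeasurable (ae_of_all _ fun s => ?_)
  simp only [arcLen, norm_mul, Real.norm_eq_abs, abs_abs]
  refine mul_le_mul_of_nonneg_left ?_ (abs_nonneg s)
  rw [abs_of_nonneg ENNReal.toReal_nonneg, abs_of_pos (by positivity : (0:ℝ) < 2),
    abs_of_pos pi_pos]
  exact ENNReal.toReal_le_of_le_ofReal (by positivity) (volume_slice_le R d s)

/-- Area of the lens `B_r(0) ∩ B_R(d)` by integration in polar coordinates. -/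
lemma lens_complex (R d r : ℝ) (hR : 0 < R) (hr : 0 ≤ r) :
    (volume (Metric.ball (0 : ℂ) r ∩ Metric.ball (d : ℂ) R)).toReal
      = ∫ s in (0:ℝ)..r, arcLen R d s := by
  set D : Set ℂ := Metric.ball (0 : ℂ) r ∩ Metric.ball (d : ℂ) R with hD
  have hDm : MeasurableSet D := measurableSet_ball.inter measurableSet_ball
  have key : ∀ s φ : ℝ, 0 < s → φ ∈ Ioo (-π) π →
      (Complex.polarCoord.symm (s, φ) ∈ D ↔ s < r ∧ φ ∈ slice R d s) := by
    intro s φ hs hφ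
    have e1 : Complex.polarCoord.symm (s, φ) = (⟨s * cos φ, s * sin φ⟩ : ℂ) := by
      rw [Complex.polarCoord_symm_apply]
      apply Complex.ext <;> simp [-Complex.ofReal_cos, -Complex.ofReal_sin]
    have hn : ‖(⟨s * cos φ, s * sin φ⟩ : ℂ)‖ = s := by
      rw [← e1, Complex.norm_polarCoord_symm, abs_of_pos hs]
    have hn2 : ‖(⟨s * cos φ, s * sin φ⟩ : ℂ) - (d : ℂ)‖ ^ 2 = s ^ 2 + d ^ 2 - 2 * s * d * cos φ := by
      rw [← Complex.normSq_eq_norm_sq, Complex.normSq_apply]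
      simp
      nlinarith [sin_sq_add_cos_sq φ]
    rw [e1, hD, Set.mem_inter_iff, Metric.mem_ball, Metric.mem_ball, dist_zero_right, hn,
      dist_eq_norm, ← sq_lt_sq₀ (norm_nonneg _) hR.le, hn2]
    simp only [slice, Set.mem_ofPred_eq, hφ, true_and]
    constructor <;> rintro ⟨h1, h2⟩ <;> exact ⟨h1, by linarith⟩
  have hv : volume D = ∫⁻ s in Ioo 0 r, ENNReal.ofReal (arcLen R d s) := by
    have h1 : volume D = ∫⁻ p : ℂ, D.indicator 1 p := by
      rw [lintegral_indicator_one hDm]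
    rw [h1, ← Complex.lintegral_comp_polarCoord_symm, polarCoord_target,
      Measure.volume_eq_prod, setLIntegral_prod]
    · have h2 : ∀ s ∈ Ioi (0:ℝ), ∫⁻ φ in Ioo (-π) π, ENNReal.ofReal ((s, φ) : ℝ × ℝ).1 •
          D.indicator (1 : ℂ → ENNReal) (Complex.polarCoord.symm (s, φ))
          = (Ioo 0 r).indicator (fun s => ENNReal.ofReal (arcLen R d s)) s := by
        intro s hs
        have hs' : (0:ℝ) < s := hs
        have h3 : ∀ φ ∈ Ioo (-π) π, ENNReal.ofReal ((s, φ) : ℝ × ℝ).1 •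
          D.indicator (1 : ℂ → ENNReal) (Complex.polarCoord.symm (s, φ))
            = (if s < r then ENNReal.ofReal s else 0) * (slice R d s).indicator 1 φ := by
          intro φ hφ
          have := key s φ hs hφ
          by_cases h4 : s < r <;> by_cases h5 : φ ∈ slice R d s <;>
            simp_all [Set.indicator]
        rw [setLIntegral_congr_fun measurableSet_Ioo h3]
        have hsm : MeasurableSet (slice R d s) := by
          have h1 : MeasurableSet {φ : ℝ | s ^ 2 + d ^ 2 - R ^ 2 < 2 * s * d * cos φ} :=
            measurableSet_lt (by fun_prop) (by fun_prop)
          exact measurableSet_Ioo.inter h1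
        rw [lintegral_const_mul _ (measurable_one.indicator hsm), lintegral_indicator_one hsm,
          Measure.restrict_apply hsm,
          Set.inter_eq_left.2 (fun φ h => h.1 : slice R d s ⊆ Ioo (-π) π)]
        by_cases h4 : s < r
        · simp only [h4, if_true, Set.indicator, Set.mem_Ioo, hs', and_self, arcLen]
          rw [ENNReal.ofReal_mul hs'.le, ENNReal.ofReal_toReal (volume_slice_ne_top R d s)]
        · simp [h4, Set.indicator]
      rw [setLIntegral_congr_fun measurableSet_Ioi h2, lintegral_indicator measurableSet_Ioo,
        Measure.restrict_restrict measurableSet_Ioo]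
      congr 2
      ext s; simp
      tauto
    · refine Measurable.aemeasurable ?_
      have hcont : Continuous fun p : ℝ × ℝ => Complex.polarCoord.symm p := by
        simp only [Complex.polarCoord_symm_apply]
        fun_prop
      refine Measurable.smul (measurable_fst.ennreal_ofReal) ?_
      exact (measurable_one.indicator hDm).comp hcont.measurable
  rw [hv, intervalIntegral.integral_of_le hr, integral_Ioc_eq_integral_Ioo,
    integral_eq_lintegral_of_nonneg_ae]
  · exact (ae_restrict_iff' measurableSet_Ioo).2 (ae_of_all _ fun s hs => arcLen_nonneg R d hs.1.le)
  · exact (measurable_arcLen R d).aestronglyMeasurable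

/-- The area of `B_r(0) ∩ B_R(y)` depends on `y` through `‖y‖` only. -/
lemma lens_plane (R r : ℝ) (y : Plane) (hR : 0 < R) (hr : 0 ≤ r) :
    (volume (Metric.ball (0 : Plane) r ∩ Metric.ball y R)).toReal
      = ∫ s in (0:ℝ)..r, arcLen R ‖y‖ s := by
  let e0 : Plane ≃ₗᵢ[ℝ] ℂ := Complex.orthonormalBasisOneI.repr.symm
  -- rotate the centre onto the positive real axis
  let e : Plane ≃ₗᵢ[ℝ] ℂ := e0.trans (rotation (Circle.exp (-(Complex.arg (e0 y)))))
  have hy : e y = (‖y‖ : ℂ) := by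
    have h1 : e y = Complex.exp (-(Complex.arg (e0 y)) * Complex.I) * e0 y := by
      change rotation (Circle.exp (-(Complex.arg (e0 y)))) (e0 y) = _
      rw [rotation_apply, Circle.coe_exp]
      push_cast
      rfl
    rw [h1]
    nth_rewrite 2 [← Complex.norm_mul_exp_arg_mul_I (e0 y)]
    rw [mul_left_comm, ← Complex.exp_add]
    simp
  rw [← lens_complex R ‖y‖ r hR hr, ← hy,
    ← (LinearIsometryEquiv.measurePreserving e).measure_preimage
      (measurableSet_ball.inter measurableSet_ball).nullMeasurableSet]
  congr 2
  ext x
  simp only [Set.mem_inter_iff, Metric.mem_ball, Set.mem_preimage, e.dist_map]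
  rw [← e.map_zero, e.dist_map]

/-! ### A Harnack-type inequality for arc lengths -/

lemma slice_subset {R d s s' : ℝ} (hs : 0 < s) (hs' : 0 < s')
    (h : (s' - s) * (s * s' - (d ^ 2 - R ^ 2)) ≤ 0) : slice R d s ⊆ slice R d s' := by
  rintro φ ⟨h1, h2⟩
  refine ⟨h1, ?_⟩
  have h3 : s * (s' ^ 2 + d ^ 2 - R ^ 2) < s * (2 * s' * d * cos φ) := by
    nlinarith [mul_lt_mul_of_pos_left h2 hs']
  exact lt_of_mul_lt_mul_left h3 hs.le

/-- Near the tangency radius `√(d² - R²)`, where the angular slice is widest, halving the angles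
maps the slice at `z` into the slice at `w`. -/
lemma half_mem_slice {R d x z w φ : ℝ} (hR : 0 < R) (hd : 0 ≤ d) (hx : R ≤ x) (hxz : x ≤ z)
    (hwx : w ≤ x + R / 2) (hzw : z ≤ w)
    (h1 : x * z < d ^ 2 - R ^ 2) (h2 : d ^ 2 - R ^ 2 < z * w)
    (hφ : φ ∈ slice R d z) : φ * (1 / 2) ∈ slice R d w := by
  obtain ⟨⟨hφ1, hφ2⟩, hφ3⟩ := hφ
  have hz : 0 < z := by linarith
  have hw : 0 < w := by linarith
  set k := d ^ 2 - R ^ 2 with hk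
  have hk0 : 0 ≤ k := by nlinarith
  set p := sqrt k with hp
  have hpk : p ^ 2 = k := sq_sqrt hk0
  have hp0 : 0 ≤ p := sqrt_nonneg k
  have hxp : x ≤ p := by
    apply le_sqrt_of_sq_le; nlinarith
  have hpw : p ≤ w := by
    apply sqrt_le_iff.2 ⟨hw.le, ?_⟩; nlinarith
  have hdp : p ≤ d := by
    apply sqrt_le_iff.2 ⟨hd, ?_⟩; nlinarith
  have hd0 : 0 < d := by linarith
  -- every slice lies inside the tangency slice `cos φ > p / d`
  have hc : p < d * cos φ := by
    have : 2 * z * p < 2 * z * (d * cos φ) := by nlinarith [sq_nonneg (z - p)]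
    exact lt_of_mul_lt_mul_left this (by positivity)
  have hch : 0 < cos (φ * (1 / 2)) :=
    cos_pos_of_mem_Ioo ⟨by linarith, by linarith⟩
  have hcs : cos φ = 2 * cos (φ * (1 / 2)) ^ 2 - 1 := by
    rw [← cos_two_mul]; ring_nf
  refine ⟨⟨by linarith [pi_pos], by linarith [pi_pos]⟩, ?_⟩
  have h3 : w ^ 2 + k ≤ 2 * w * p + R ^ 2 / 4 := by
    nlinarith [mul_self_nonneg (w - p)]
  have h4 : (2 * w * p + R ^ 2 / 4) ^ 2 ≤ 2 * w ^ 2 * (d ^ 2 + d * p) := by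
    have hRw : R ≤ w := by linarith
    have e1 : w * p * R ^ 2 ≤ w * w * R ^ 2 := by gcongr
    have e2 : R ^ 2 * R ^ 2 ≤ w ^ 2 * R ^ 2 := by gcongr
    have e3 : w ^ 2 * (p * p) ≤ w ^ 2 * (d * p) := by gcongr
    nlinarith
  have h5 : 2 * w ^ 2 * (d ^ 2 + d * p) < (2 * w * d * cos (φ * (1 / 2))) ^ 2 := by
    have : d * p < d * (d * cos φ) := by gcongr
    have : w ^ 2 * (d * p) < w ^ 2 * (d * (d * cos φ)) := by gcongr
    rw [hcs] at this
    nlinarith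
  have h6 : 0 ≤ 2 * w * d * cos (φ * (1 / 2)) := by positivity
  have h7 : 2 * w * p + R ^ 2 / 4 < 2 * w * d * cos (φ * (1 / 2)) :=
    lt_of_pow_lt_pow_left₀ 2 h6 (h4.trans_lt h5)
  rw [hk] at h3
  linarith

/-- On a radial window of length `R/2`, the arc length at an intermediate radius is controlled by
the arc lengths at the two outer radii. -/
lemma arcLen_harnack {R d x z w : ℝ} (hR : 0 < R) (hd : 0 ≤ d) (hx : R ≤ x) (hxz : x ≤ z)
    (hzw : z ≤ w) (hwx : w ≤ x + R / 2) :
    arcLen R d z ≤ 3 * (arcLen R d x + arcLen R d w) := by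
  have hz0 : 0 < z := by linarith
  have hw0 : 0 < w := by linarith
  have hx0 : 0 < x := by linarith
  have key : (volume (slice R d z)).toReal
      ≤ 2 * (volume (slice R d x)).toReal + 2 * (volume (slice R d w)).toReal := by
    have n1 : 0 ≤ (volume (slice R d x)).toReal := ENNReal.toReal_nonneg
    have n2 : 0 ≤ (volume (slice R d w)).toReal := ENNReal.toReal_nonneg
    by_cases h1 : d ^ 2 - R ^ 2 ≤ x * z
    · have := ENNReal.toReal_mono (volume_slice_ne_top R d x)
        (measure_mono (μ := volume) (slice_subset (d := d) (R := R) hz0 hx0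
          (by nlinarith)))
      linarith
    by_cases h2 : z * w ≤ d ^ 2 - R ^ 2
    · have := ENNReal.toReal_mono (volume_slice_ne_top R d w)
        (measure_mono (μ := volume) (slice_subset (d := d) (R := R) hz0 hw0
          (by nlinarith)))
      linarith
    push Not at h1 h2
    have h3 : slice R d z ⊆ (· * (1 / 2 : ℝ)) ⁻¹' slice R d w := fun φ hφ =>
      half_mem_slice hR hd hx hxz hwx hzw h1 h2 hφ
    have h4 := measure_mono (μ := volume) h3
    rw [Real.volume_preimage_mul_right (by norm_num)] at h4
    have h5 := ENNReal.toReal_mono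
      (ENNReal.mul_ne_top ENNReal.ofReal_ne_top (volume_slice_ne_top R d w)) h4
    rw [ENNReal.toReal_mul, ENNReal.toReal_ofReal (abs_nonneg _)] at h5
    norm_num at h5
    linarith
  have n1 : 0 ≤ (volume (slice R d x)).toReal := ENNReal.toReal_nonneg
  have n2 : 0 ≤ (volume (slice R d w)).toReal := ENNReal.toReal_nonneg
  unfold arcLen
  have e0 := mul_le_mul_of_nonneg_left key hz0.le
  have e1 : z * (volume (slice R d x)).toReal ≤ 3 / 2 * x * (volume (slice R d x)).toReal := by
    gcongr; linarith
  have e2 : z * (volume (slice R d w)).toReal ≤ w * (volume (slice R d w)).toReal := by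
    gcongr
  have e3 : 0 ≤ w * (volume (slice R d w)).toReal := by positivity
  linarith

/-- Quantitative non-concentration of increments at scale `R`: for consecutive intervals
`[s, t]`, `[g₁, g₂]`, `[s', t']` in a window of length `R/2` beyond radius `R`, the mean slope of
`Φ` over the middle one is at most three times the sum of the mean slopes over the outer two. The
inequality is multiplied out, so that degenerate intervals are allowed. -/
def Spread (R : ℝ) (Φ : ℝ → ℝ) : Prop :=
  ∀ s t g₁ g₂ s' t' : ℝ, R ≤ s → s ≤ t → t ≤ g₁ → g₁ ≤ g₂ → g₂ ≤ s' → s' ≤ t' → t' ≤ s + R / 2 →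
    (t - s) * (t' - s') * (Φ g₂ - Φ g₁)
      ≤ 3 * (g₂ - g₁) * ((t' - s') * (Φ t - Φ s) + (t - s) * (Φ t' - Φ s'))

lemma spread_integral {R d : ℝ} (hR : 0 < R) (hd : 0 ≤ d) :
    Spread R fun r => ∫ s in (0:ℝ)..r, arcLen R d s := by
  intro s t g₁ g₂ s' t' h0 h1 h2 h3 h4 h5 h6
  have ii := arcLen_intervalIntegrable R d
  simp only [intervalIntegral.integral_interval_sub_left (ii _ _) (ii _ _)]
  set f := arcLen R d
  set G := ∫ z in g₁..g₂, f z
  have e1 : ∀ x ∈ Icc s t, ∀ w ∈ Icc s' t', G ≤ 3 * (g₂ - g₁) * (f x + f w) := by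
    intro x hx w hw
    have := intervalIntegral.integral_mono_on (g := fun _ => 3 * (f x + f w)) h3 (ii g₁ g₂)
      (by simp) fun z hz => arcLen_harnack (d := d) hR hd (h0.trans hx.1)
        (by linarith [hx.2, hz.1]) (by linarith [hz.2, hw.1]) (by linarith [hx.1, hw.2])
    rw [intervalIntegral.integral_const, smul_eq_mul] at this
    calc G ≤ _ := this
      _ = _ := by ring
  have e2 : ∀ w ∈ Icc s' t', (t - s) * G
      ≤ 3 * (g₂ - g₁) * ((∫ x in s..t, f x) + (t - s) * f w) := by
    intro w hw
    have := intervalIntegral.integral_mono_on (f := fun _ => G)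
      (g := fun x => 3 * (g₂ - g₁) * (f x + f w)) h1 (by simp)
      (((ii s t).add (by simp)).const_mul _) fun x hx => e1 x hx w hw
    rw [intervalIntegral.integral_const, smul_eq_mul, intervalIntegral.integral_const_mul,
      intervalIntegral.integral_add (ii s t) (by simp), intervalIntegral.integral_const,
      smul_eq_mul] at this
    exact this
  have := intervalIntegral.integral_mono_on (f := fun _ => (t - s) * G)
      (g := fun w => 3 * (g₂ - g₁) * ((∫ x in s..t, f x) + (t - s) * f w)) h5 (by simp)
      (((by simp : IntervalIntegrable (fun _ => ∫ x in s..t, f x) volume s' t').add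
        ((ii s' t').const_mul _)).const_mul _) fun w hw => e2 w hw
  rw [intervalIntegral.integral_const, smul_eq_mul, intervalIntegral.integral_const_mul,
      intervalIntegral.integral_add (by simp) ((ii s' t').const_mul _),
      intervalIntegral.integral_const, intervalIntegral.integral_const_mul, smul_eq_mul] at this
  calc (t - s) * (t' - s') * G = (t' - s') * ((t - s) * G) := by ring
    _ ≤ _ := this

/-! ### Functions with spread increments are not close to even integers for long -/

/-- Radii in `J` at which `Φ` is at distance at most `ε` from `2q`. -/
def nearSet (Φ : ℝ → ℝ) (ε : ℝ) (J : Set ℝ) (q : ℤ) : Set ℝ := {r ∈ J | |Φ r - 2 * q| ≤ ε}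

/-- Radii in `J` at which `Φ` lies between `2q` and `2q + 2`, at distance at least `ε` from both. -/
def gapSet (Φ : ℝ → ℝ) (ε : ℝ) (J : Set ℝ) (q : ℤ) : Set ℝ :=
  {r ∈ J | 2 * q + ε ≤ Φ r ∧ Φ r ≤ 2 * q + 2 - ε}

/-- Radii in `J` at which `Φ` is at distance at least `ε` from `2ℤ`. -/
def farSet (Φ : ℝ → ℝ) (ε : ℝ) (J : Set ℝ) : Set ℝ := {r ∈ J | ∀ q : ℤ, ε ≤ |Φ r - 2 * q|}

lemma gapSet_subset_farSet (Φ : ℝ → ℝ) (ε : ℝ) (J : Set ℝ) (q : ℤ) :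
    gapSet Φ ε J q ⊆ farSet Φ ε J := by
  rintro r ⟨hr, h1, h2⟩
  refine ⟨hr, fun p => ?_⟩
  rcases le_or_gt p q with h | h
  · have : (p : ℝ) ≤ q := by exact_mod_cast h
    rw [le_abs]; left; linarith
  · have : (q : ℝ) + 1 ≤ p := by exact_mod_cast h
    rw [le_abs]; right; linarith

/-- If `Φ` is near `2p` on `[s, t]` and near `2q` on `[s', t']`, `p < q`, then the transition
between any two consecutive even integers in between takes at least as long as the shorter of
these two intervals. -/
lemma gap_length {R ε : ℝ} {Φ : ℝ → ℝ} (hε : 0 < ε) (hε' : ε ≤ 1 / 7)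
    (hmono : Monotone Φ) (hcont : ContinuousOn Φ (Ici R)) (hsp : Spread R Φ)
    {j s t s' t' : ℝ} (hj : R ≤ j) {p q k : ℤ} (hpk : p ≤ k) (hkq : k < q) (hst : s ≤ t)
    (hst' : s' ≤ t')
    (h1 : s ∈ nearSet Φ ε (Icc j (j + R / 2)) p) (h2 : t ∈ nearSet Φ ε (Icc j (j + R / 2)) p)
    (h3 : s' ∈ nearSet Φ ε (Icc j (j + R / 2)) q) (h4 : t' ∈ nearSet Φ ε (Icc j (j + R / 2)) q) :
    ENNReal.ofReal (min (t - s) (t' - s')) ≤ volume (gapSet Φ ε (Icc j (j + R / 2)) k) := by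
  obtain ⟨⟨a1, b1⟩, c1⟩ := h1
  obtain ⟨⟨a2, b2⟩, c2⟩ := h2
  obtain ⟨⟨a3, b3⟩, c3⟩ := h3
  obtain ⟨⟨a4, b4⟩, c4⟩ := h4
  rw [abs_le] at c1 c2 c3 c4
  have hpk' : (p : ℝ) ≤ k := by exact_mod_cast hpk
  have hkq' : (k : ℝ) + 1 ≤ q := by exact_mod_cast hkq
  have hts' : t ≤ s' := by
    by_contra h
    have := hmono (not_le.1 h).le
    linarith
  have hct : ContinuousOn Φ (Icc t s') := hcont.mono fun r hr => (hj.trans a2).trans hr.1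
  obtain ⟨g₁, hg1, e1⟩ := intermediate_value_Icc hts' hct
    (show 2 * (k : ℝ) + ε ∈ Icc (Φ t) (Φ s') from ⟨by linarith, by linarith⟩)
  obtain ⟨g₂, hg2, e2⟩ := intermediate_value_Icc hts' hct
    (show 2 * (k : ℝ) + 2 - ε ∈ Icc (Φ t) (Φ s') from ⟨by linarith, by linarith⟩)
  have hg : g₁ ≤ g₂ := by
    by_contra h
    have := hmono (not_le.1 h).le
    linarith
  have hsub : Icc g₁ g₂ ⊆ gapSet Φ ε (Icc j (j + R / 2)) k := fun r hr =>
    ⟨⟨(a2.trans hg1.1).trans hr.1, (hr.2.trans hg2.2).trans b3⟩,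
      e1 ▸ hmono hr.1, e2 ▸ hmono hr.2⟩
  refine le_trans ?_ (measure_mono hsub)
  rw [Real.volume_Icc]
  apply ENNReal.ofReal_le_ofReal
  by_contra hlt
  push Not at hlt
  rw [lt_min_iff] at hlt
  obtain ⟨l1, l2⟩ := hlt
  have H := hsp s t g₁ g₂ s' t' (hj.trans a1) hst hg1.1 hg hg2.2 hst' (by linarith)
  rw [e1, e2] at H
  set x := t - s
  set w := t' - s'
  set g := g₂ - g₁
  have hg0 : 0 ≤ g := by linarith
  have hx : 0 < x := by linarith
  have hw : 0 < w := by linarith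
  have i1 : w * (Φ t - Φ s) ≤ w * (2 / 7) := by gcongr; linarith
  have i2 : x * (Φ t' - Φ s') ≤ x * (2 / 7) := by gcongr; linarith
  have i3 : x * w * (12 / 7) ≤ 3 * g * (w * (2 / 7) + x * (2 / 7)) := by
    calc x * w * (12 / 7) ≤ x * w * (2 * k + 2 - ε - (2 * k + ε)) := by gcongr; linarith
      _ ≤ _ := H
      _ ≤ _ := by gcongr
  nlinarith [mul_lt_mul_of_pos_right l1 hw, mul_lt_mul_of_pos_right l2 hx]

/-- A near set is empty or a compact interval. -/
lemma nearSet_cases {R ε : ℝ} {Φ : ℝ → ℝ} (hmono : Monotone Φ)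
    (hcont : ContinuousOn Φ (Ici R)) {j : ℝ} (hj : R ≤ j) (q : ℤ) :
    nearSet Φ ε (Icc j (j + R / 2)) q = ∅ ∨ ∃ s t, s ≤ t ∧
      nearSet Φ ε (Icc j (j + R / 2)) q = Icc s t := by
  rcases Set.eq_empty_or_nonempty (nearSet Φ ε (Icc j (j + R / 2)) q) with h | h
  · exact Or.inl h
  right
  have e : nearSet Φ ε (Icc j (j + R / 2)) q
      = Icc j (j + R / 2) ∩ Φ ⁻¹' (Icc (2 * q - ε) (2 * q + ε)) := by
    ext r
    constructor
    · rintro ⟨h1, h2⟩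
      rw [abs_le] at h2
      exact ⟨h1, by constructor <;> linarith⟩
    · rintro ⟨h1, h2, h3⟩
      refine ⟨h1, ?_⟩
      rw [abs_le]
      constructor <;> linarith
  have hcl : IsClosed (nearSet Φ ε (Icc j (j + R / 2)) q) := by
    rw [e]
    exact (hcont.mono fun r hr => hj.trans hr.1).preimage_isClosed_of_isClosed isClosed_Icc
      isClosed_Icc
  have hcpt : IsCompact (nearSet Φ ε (Icc j (j + R / 2)) q) :=
    isCompact_Icc.of_isClosed_subset hcl fun r hr => hr.1
  have hoc : (nearSet Φ ε (Icc j (j + R / 2)) q).OrdConnected := by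
    rw [e]
    exact ordConnected_Icc.inter (ordConnected_Icc.preimage_mono hmono)
  have := eq_Icc_of_connected_compact ⟨h, hoc.isPreconnected⟩ hcpt
  refine ⟨_, _, ?_, this⟩
  rw [this] at h
  exact nonempty_Icc.1 h

/-- If the far set is short, then a single near set fills the window up to twice its length. -/
lemma exists_dominant {R ε : ℝ} {Φ : ℝ → ℝ} (hR : 0 < R) (hε : 0 < ε) (hε' : ε ≤ 1 / 7)
    (hmono : Monotone Φ) (hcont : ContinuousOn Φ (Ici R)) (hsp : Spread R Φ)
    {j : ℝ} (hj : R ≤ j) :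
    ∃ a : ℤ, volume (Icc j (j + R / 2) \ nearSet Φ ε (Icc j (j + R / 2)) a)
      ≤ 2 * volume (farSet Φ ε (Icc j (j + R / 2))) := by
  set J := Icc j (j + R / 2) with hJ
  -- only finitely many near sets are nonempty; `a` indexes a longest one
  obtain ⟨a, ha⟩ : ∃ a : ℤ, ∀ q, volume (nearSet Φ ε J q) ≤ volume (nearSet Φ ε J a) := by
    set S := Finset.Icc ⌊Φ j / 2 - 1⌋ ⌈Φ (j + R / 2) / 2 + 1⌉ with hS
    have hne : S.Nonempty := by
      rw [hS, Finset.nonempty_Icc]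
      have h1 := Int.floor_le (Φ j / 2 - 1)
      have h2 := Int.le_ceil (Φ (j + R / 2) / 2 + 1)
      have h3 := hmono (show j ≤ j + R / 2 by linarith)
      have : ((⌊Φ j / 2 - 1⌋ : ℤ) : ℝ) ≤ ⌈Φ (j + R / 2) / 2 + 1⌉ := by linarith
      exact_mod_cast this
    obtain ⟨a, -, ha⟩ := S.exists_max_image (fun q => volume (nearSet Φ ε J q)) hne
    refine ⟨a, fun q => ?_⟩
    by_cases hq : q ∈ S
    · exact ha q hq
    have : nearSet Φ ε J q = ∅ := by
      by_contra hne
      obtain ⟨r, ⟨hr1, hr2⟩, hr3⟩ := Set.nonempty_iff_ne_empty.2 hne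
      apply hq
      rw [abs_le] at hr3
      have h1 := hmono hr1
      have h2 := hmono hr2
      rw [hS, Finset.mem_Icc]
      constructor
      · have := Int.floor_le (Φ j / 2 - 1)
        have : ((⌊Φ j / 2 - 1⌋ : ℤ) : ℝ) ≤ q := by linarith
        exact_mod_cast this
      · have := Int.le_ceil (Φ (j + R / 2) / 2 + 1)
        have : (q : ℝ) ≤ ⌈Φ (j + R / 2) / 2 + 1⌉ := by linarith
        exact_mod_cast this
    rw [this]; simp
  refine ⟨a, ?_⟩
  -- the gap adjacent to the `q`-th near set on the side of the `a`-th one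
  let F : ℤ → Set ℝ := fun q =>
    if a < q then gapSet Φ ε J (q - 1) else if q < a then gapSet Φ ε J q else ∅
  have hlen : ∀ q, q ≠ a → volume (nearSet Φ ε J q) ≤ volume (F q) := by
    intro q hq
    rcases nearSet_cases (ε := ε) hmono hcont hj q with h | ⟨s', t', hst', h⟩
    · rw [← hJ] at h; rw [h]; simp
    rcases nearSet_cases (ε := ε) hmono hcont hj a with h0 | ⟨s, t, hst, h0⟩
    · rw [← hJ] at h0
      exact (ha q).trans (by rw [h0]; simp)
    have hle := ha q
    rw [← hJ] at h h0
    rw [h, h0, Real.volume_Icc, Real.volume_Icc, ENNReal.ofReal_le_ofReal_iff (by linarith)] at hle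
    rw [h, Real.volume_Icc]
    have m1 : s ∈ nearSet Φ ε J a := by rw [h0]; exact left_mem_Icc.2 hst
    have m2 : t ∈ nearSet Φ ε J a := by rw [h0]; exact right_mem_Icc.2 hst
    have m3 : s' ∈ nearSet Φ ε J q := by rw [h]; exact left_mem_Icc.2 hst'
    have m4 : t' ∈ nearSet Φ ε J q := by rw [h]; exact right_mem_Icc.2 hst'
    rcases lt_or_gt_of_ne hq with hlt | hlt
    · have := gap_length hε hε' hmono hcont hsp hj (le_refl q) hlt hst' hst m3 m4 m1 m2
      rw [min_eq_left hle] at this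
      simpa only [F, if_neg (not_lt.2 hlt.le), if_pos hlt] using this
    · have := gap_length hε hε' hmono hcont hsp hj (k := q - 1) (by omega) (by omega)
        hst hst' m1 m2 m3 m4
      rw [min_eq_right hle] at this
      simpa only [F, if_pos hlt] using this
  have hgm : ∀ q, MeasurableSet (gapSet Φ ε J q) := fun q =>
    measurableSet_Icc.inter ((measurableSet_le measurable_const hmono.measurable).inter
      (measurableSet_le hmono.measurable measurable_const))
  have hFm : ∀ q, MeasurableSet (F q) := by
    intro q
    simp only [F]
    split_ifs
    exacts [hgm _, hgm _, MeasurableSet.empty]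
  have hgd : ∀ p q, p < q → Disjoint (gapSet Φ ε J p) (gapSet Φ ε J q) := by
    intro p q hpq
    rw [Set.disjoint_left]
    rintro r ⟨-, -, h1⟩ ⟨-, h2, -⟩
    have : (p : ℝ) + 1 ≤ q := by exact_mod_cast hpq
    linarith
  have hFd : Pairwise (Function.onFun Disjoint F) := by
    refine pairwise_disjoint_on F |>.2 ?_
    intro p q hpq
    simp only [F]
    split_ifs <;> first | exact hgd _ _ (by omega) | exact (Set.disjoint_empty _) | exact (Set.empty_disjoint _)
  have hFfar : (⋃ q, F q) ⊆ farSet Φ ε J := by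
    refine iUnion_subset fun q => ?_
    simp only [F]
    split_ifs
    exacts [gapSet_subset_farSet .., gapSet_subset_farSet .., empty_subset _]
  have hcov : J \ nearSet Φ ε J a ⊆
      farSet Φ ε J ∪ ⋃ q, (if q = a then ∅ else nearSet Φ ε J q) := by
    rintro r ⟨hr, hra⟩
    by_cases hf : r ∈ farSet Φ ε J
    · exact Or.inl hf
    right
    have : ∃ q : ℤ, |Φ r - 2 * q| < ε := by
      by_contra hcon
      push Not at hcon
      exact hf ⟨hr, hcon⟩
    obtain ⟨q, hq⟩ := this
    refine mem_iUnion.2 ⟨q, ?_⟩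
    have hqa : q ≠ a := by
      rintro rfl
      exact hra ⟨hr, hq.le⟩
    rw [if_neg hqa]
    exact ⟨hr, hq.le⟩
  calc volume (J \ nearSet Φ ε J a)
      ≤ volume (farSet Φ ε J) + volume (⋃ q, (if q = a then ∅ else nearSet Φ ε J q)) :=
        (measure_mono hcov).trans (measure_union_le _ _)
    _ ≤ volume (farSet Φ ε J) + ∑' q, volume (F q) := by
        gcongr
        refine (measure_iUnion_le _).trans (ENNReal.tsum_le_tsum fun q => ?_)
        split_ifs with h
        · simp
        · exact hlen q h
    _ = volume (farSet Φ ε J) + volume (⋃ q, F q) := by rw [measure_iUnion hFd hFm]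
    _ ≤ volume (farSet Φ ε J) + volume (farSet Φ ε J) := by gcongr
    _ = _ := by rw [two_mul]

/-- If the far set is short, then `Φ` stays near a single even integer in the middle of the window:
by monotonicity, a radius where it does not would exclude a whole end of the window. -/
lemma window_const {R ε : ℝ} {Φ : ℝ → ℝ} (hR : 0 < R) (hε : 0 < ε) (hε' : ε ≤ 1 / 7)
    (hmono : Monotone Φ) (hcont : ContinuousOn Φ (Ici R)) (hsp : Spread R Φ)
    {j : ℝ} (hj : R ≤ j)
    (hfar : volume (farSet Φ ε (Icc j (j + R / 2))) < ENNReal.ofReal (R / 32)) :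
    ∃ a : ℤ, ∀ r ∈ Icc (j + R / 16) (j + 7 * R / 16), |Φ r - 2 * a| ≤ ε := by
  obtain ⟨a, ha⟩ := exists_dominant hR hε hε' hmono hcont hsp hj
  refine ⟨a, fun r hr => ?_⟩
  have hlt : volume (Icc j (j + R / 2) \ nearSet Φ ε (Icc j (j + R / 2)) a)
      < ENNReal.ofReal (R / 16) := by
    refine ha.trans_lt ?_
    calc 2 * volume (farSet Φ ε (Icc j (j + R / 2))) < 2 * ENNReal.ofReal (R / 32) := by
          rw [ENNReal.mul_lt_mul_iff_right (by simp) (by simp)]; exact hfar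
      _ = ENNReal.ofReal (R / 16) := by
          rw [show (2 : ENNReal) = ENNReal.ofReal 2 by simp, ← ENNReal.ofReal_mul (by norm_num)]
          ring_nf
  by_contra hcon
  apply absurd hlt
  rw [not_lt]
  rw [abs_le, not_and_or] at hcon
  rcases hcon with h | h
  · -- all radii to the left of `r` are outside the near set
    have hsub : Icc j r ⊆ Icc j (j + R / 2) \ nearSet Φ ε (Icc j (j + R / 2)) a := by
      intro x hx
      refine ⟨⟨hx.1, by linarith [hx.2, hr.2]⟩, fun hn => h ?_⟩
      have := (abs_le.1 hn.2).1
      linarith [hmono hx.2]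
    refine le_trans ?_ (measure_mono hsub)
    rw [Real.volume_Icc]
    exact ENNReal.ofReal_le_ofReal (by linarith [hr.1])
  · have hsub : Icc r (j + R / 2) ⊆ Icc j (j + R / 2) \ nearSet Φ ε (Icc j (j + R / 2)) a := by
      intro x hx
      refine ⟨⟨by linarith [hx.1, hr.1], hx.2⟩, fun hn => h ?_⟩
      have := (abs_le.1 hn.2).2
      linarith [hmono hx.1]
    refine le_trans ?_ (measure_mono hsub)
    rw [Real.volume_Icc]
    exact ENNReal.ofReal_le_ofReal (by linarith [hr.2])

/-- Chaining overlapping windows: if the far set in `[a, a + 5R]` is short, then `Φ` stays near a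
single even integer on `[a + R/16, a + 79R/16]`. -/
lemma long_const {R ε : ℝ} {Φ : ℝ → ℝ} (hR : 0 < R) (hε : 0 < ε) (hε' : ε ≤ 1 / 7)
    (hmono : Monotone Φ) (hcont : ContinuousOn Φ (Ici R)) (hsp : Spread R Φ)
    {a : ℝ} (ha : R ≤ a)
    (hfar : volume (farSet Φ ε (Icc a (a + 5 * R))) < ENNReal.ofReal (R / 32)) :
    ∃ q : ℤ, ∀ r ∈ Icc (a + R / 16) (a + 79 * R / 16), |Φ r - 2 * q| ≤ ε := by
  have hw : ∀ n : ℕ, n ≤ 18 → ∃ q : ℤ, ∀ r ∈ Icc (a + n * R / 4 + R / 16)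
      (a + n * R / 4 + 7 * R / 16), |Φ r - 2 * q| ≤ ε := by
    intro n hn
    have hn' : (n : ℝ) ≤ 18 := by exact_mod_cast hn
    have hn0 : 0 ≤ (n : ℝ) * R := by positivity
    have hnR : (n : ℝ) * R ≤ 18 * R := by gcongr
    refine window_const hR hε hε' hmono hcont hsp (by linarith)
      ((measure_mono ?_).trans_lt hfar)
    rintro r ⟨hr, h⟩
    exact ⟨⟨by linarith [hr.1], by linarith [hr.2]⟩, h⟩
  obtain ⟨q, hq⟩ := hw 0 (by norm_num)
  refine ⟨q, ?_⟩
  have hind : ∀ n : ℕ, n ≤ 18 → ∀ r ∈ Icc (a + n * R / 4 + R / 16)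
      (a + n * R / 4 + 7 * R / 16), |Φ r - 2 * q| ≤ ε := by
    intro n
    induction n with
    | zero => intro _; exact hq
    | succ n ih =>
      intro hn
      obtain ⟨p, hp⟩ := hw (n + 1) hn
      -- the two windows overlap, so their even integers agree
      have m1 := ih (by omega) (a + n * R / 4 + 3 * R / 8)
        ⟨by linarith, by linarith⟩
      have m2 := hp (a + n * R / 4 + 3 * R / 8)
        ⟨by push_cast; linarith, by push_cast; linarith⟩
      rw [abs_le] at m1 m2
      have e : p = q := by
        have h1 : (p : ℝ) < q + 1 := by linarith
        have h2 : (q : ℝ) < p + 1 := by linarith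
        have h1' : p < q + 1 := by exact_mod_cast h1
        have h2' : q < p + 1 := by exact_mod_cast h2
        omega
      exact e ▸ hp
  intro r hr
  have b1 := hind 0 (by norm_num) (a + R / 16) ⟨by push_cast; linarith, by push_cast; linarith⟩
  have b2 := hind 18 le_rfl (a + 79 * R / 16) ⟨by push_cast; linarith, by push_cast; linarith⟩
  rw [abs_le] at b1 b2 ⊢
  have c1 := hmono hr.1
  have c2 := hmono hr.2
  constructor <;> linarith

/-! ### The flux and the effective coupling -/

lemma alphaN_bddBelow (α : ℝ) (N : ℕ) : BddBelow {t : ℝ | ∃ p : ℕ, p + 1 < N ∧ ∃ q : ℤ,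
    t = |(2 * (p : ℝ) + 1) * α - 2 * (q : ℝ)|} :=
  ⟨0, by rintro t ⟨p, -, q, rfl⟩; exact abs_nonneg _⟩

lemma alphaN_le (α : ℝ) {N p : ℕ} (hp : p + 1 < N) (q : ℤ) :
    alphaN α N ≤ |(2 * (p : ℝ) + 1) * α - 2 * (q : ℝ)| :=
  csInf_le (alphaN_bddBelow α N) ⟨p, hp, q, rfl⟩

lemma alphaN_nonneg (α : ℝ) (N : ℕ) : 0 ≤ alphaN α N :=
  Real.sInf_nonneg (by rintro t ⟨p, -, q, rfl⟩; exact abs_nonneg _)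

lemma alphaN_le_abs (α : ℝ) {N : ℕ} (hN : 2 ≤ N) : alphaN α N ≤ |α| := by
  simpa using alphaN_le α (p := 0) (N := N) (by omega) 0

lemma alphaN_le_one (α : ℝ) {N : ℕ} (hN : 2 ≤ N) : alphaN α N ≤ 1 := by
  have h := alphaN_le α (p := 0) (N := N) (by omega) (round (α / 2))
  have h2 := abs_sub_round (α / 2)
  refine h.trans ?_
  rw [abs_le] at h2 ⊢
  push_cast
  constructor <;> linarith [h2.1, h2.2]

/-- The normalized flux with `α` replaced by `|α|`, which makes it nondecreasing; its distance to
`2ℤ` is unchanged. -/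
def absFlux (α R : ℝ) {m : ℕ} (y : Fin m → Plane) (r : ℝ) : ℝ := |α| * (1 + 2 * countN R y r)

lemma lens_mono (R : ℝ) (y : Plane) :
    Monotone fun r => (volume (Metric.ball (0 : Plane) r ∩ Metric.ball y R)).toReal := by
  intro r r' h
  refine ENNReal.toReal_mono ?_ (measure_mono (inter_subset_inter_left _ (Metric.ball_subset_ball h)))
  exact ((measure_mono inter_subset_right).trans_lt measure_ball_lt_top).ne

lemma countN_mono (R : ℝ) {m : ℕ} (y : Fin m → Plane) : Monotone (countN R y) := by
  intro r r' h
  unfold countN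
  exact Finset.sum_le_sum fun l _ =>
    div_le_div_of_nonneg_right (lens_mono R (y l) h) (by positivity)

lemma absFlux_mono (α R : ℝ) {m : ℕ} (y : Fin m → Plane) : Monotone (absFlux α R y) := by
  intro r r' h
  unfold absFlux
  gcongr
  exact countN_mono R y h

lemma countN_eq {R : ℝ} (hR : 0 < R) {m : ℕ} (y : Fin m → Plane) {r : ℝ} (hr : 0 ≤ r) :
    countN R y r = ∑ l, (∫ s in (0:ℝ)..r, arcLen R ‖y l‖ s) / (π * R ^ 2) := by
  unfold countN
  simp only [lens_plane R r _ hR hr]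

lemma absFlux_contOn (α : ℝ) {R : ℝ} (hR : 0 < R) {m : ℕ} (y : Fin m → Plane) :
    ContinuousOn (absFlux α R y) (Ici R) := by
  have h : Continuous fun r =>
      |α| * (1 + 2 * ∑ l, (∫ s in (0:ℝ)..r, arcLen R ‖y l‖ s) / (π * R ^ 2)) := by
    refine continuous_const.mul (continuous_const.add (continuous_const.mul ?_))
    refine continuous_finsetSum _ fun l _ => Continuous.div_const ?_ _
    exact intervalIntegral.continuous_primitive (fun a b => arcLen_intervalIntegrable R _ a b) 0
  refine h.continuousOn.congr fun r hr => ?_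
  simp only [absFlux, countN_eq hR y (hR.le.trans hr)]

lemma absFlux_spread (α : ℝ) {R : ℝ} (hR : 0 < R) {m : ℕ} (y : Fin m → Plane) :
    Spread R (absFlux α R y) := by
  intro s t g₁ g₂ s' t' h0 h1 h2 h3 h4 h5 h6
  have hl : ∀ l : Fin m, _ := fun l =>
    spread_integral (R := R) hR (norm_nonneg (y l)) s t g₁ g₂ s' t' h0 h1 h2 h3 h4 h5 h6
  simp only [absFlux]
  rw [countN_eq hR y (by linarith : 0 ≤ s), countN_eq hR y (by linarith : 0 ≤ t),
    countN_eq hR y (by linarith : 0 ≤ g₁), countN_eq hR y (by linarith : 0 ≤ g₂),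
    countN_eq hR y (by linarith : 0 ≤ s'), countN_eq hR y (by linarith : 0 ≤ t')]
  simp only [← Finset.sum_div]
  have hs := Finset.sum_le_sum fun l (_ : l ∈ Finset.univ) => hl l
  simp only [← Finset.mul_sum, Finset.sum_add_distrib, Finset.sum_sub_distrib] at hs
  have hc : 0 ≤ |α| * 2 / (π * R ^ 2) := by positivity
  have := mul_le_mul_of_nonneg_left hs hc
  calc _ = _ := ?_
    _ ≤ _ := this
    _ = _ := ?_ <;> ring

lemma lens_outside {R r : ℝ} {y : Plane} (h : r + R ≤ ‖y‖) :
    (volume (Metric.ball (0 : Plane) r ∩ Metric.ball y R)).toReal = 0 := by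
  have : Metric.ball (0 : Plane) r ∩ Metric.ball y R = ∅ :=
    Set.disjoint_iff_inter_eq_empty.1
      (Metric.ball_disjoint_ball (by rwa [dist_zero_left]))
  rw [this]; simp

lemma lens_inside {R r : ℝ} {y : Plane} (hR : 0 < R) (h : ‖y‖ + R ≤ r) :
    (volume (Metric.ball (0 : Plane) r ∩ Metric.ball y R)).toReal = π * R ^ 2 := by
  have : Metric.ball (0 : Plane) r ∩ Metric.ball y R = Metric.ball y R := by
    apply Set.inter_eq_right.2
    apply Metric.ball_subset_ball'
    rw [dist_zero_right]; linarith
  rw [this, EuclideanSpace.volume_ball_fin_two]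
  simp [ENNReal.toReal_ofReal hR.le, mul_comm, pi_pos.le]

/-- If no centre lies at distance between `p - R` and `p + R`, then no disk is cut by the circle
of radius `p` and `𝒩(p)` is an integer, so the flux is at distance at least `α_N` from `2ℤ`. -/
lemma absFlux_of_no_center (α : ℝ) {N : ℕ} (hN : 2 ≤ N) {R : ℝ} (hR : 0 < R)
    (y : Fin (N - 2) → Plane) {p : ℝ}
    (h : ∀ l, ‖y l‖ ≤ p - R ∨ p + R ≤ ‖y l‖) (q : ℤ) :
    alphaN α N ≤ |absFlux α R y p - 2 * q| := by
  classical
  have hc : countN R y p = ((Finset.univ.filter fun l => ‖y l‖ ≤ p - R).card : ℝ) := by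
    unfold countN
    rw [Finset.card_filter]
    push_cast
    refine Finset.sum_congr rfl fun l _ => ?_
    split_ifs with hl
    · rw [lens_inside hR (by linarith)]
      exact div_self (by positivity)
    · rw [lens_outside (by rcases h l with h | h; exact absurd h hl; exact h)]
      simp
  set n := (Finset.univ.filter fun l => ‖y l‖ ≤ p - R).card
  have hn : n ≤ N - 2 := by
    refine (Finset.card_le_univ _).trans ?_
    simp
  rw [absFlux, hc]
  rcases abs_cases α with ⟨e, -⟩ | ⟨e, -⟩
  · have := alphaN_le α (p := n) (N := N) (by omega) q
    rw [e]
    convert this using 2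
    ring
  · have := alphaN_le α (p := n) (N := N) (by omega) (-q)
    rw [e, ← abs_neg]
    convert this using 2
    push_cast
    ring

/-- A centre at distance between `p - R` and `p + R` makes `𝒩` grow by at least one across
`[p - 2R, p + 2R]`. -/
lemma absFlux_of_center (α : ℝ) {R : ℝ} (hR : 0 < R) {m : ℕ} (y : Fin m → Plane) {p a b : ℝ}
    (l : Fin m) (h1 : p - R < ‖y l‖) (h2 : ‖y l‖ < p + R) (ha : a ≤ p - 2 * R)
    (hb : p + 2 * R ≤ b) : absFlux α R y a + 2 * |α| ≤ absFlux α R y b := by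
  have hc : 1 ≤ countN R y b - countN R y a := by
    unfold countN
    rw [← Finset.sum_sub_distrib]
    refine le_trans ?_ (Finset.single_le_sum (f := fun l =>
      (volume (Metric.ball (0 : Plane) b ∩ Metric.ball (y l) R)).toReal / (π * R ^ 2) -
      (volume (Metric.ball (0 : Plane) a ∩ Metric.ball (y l) R)).toReal / (π * R ^ 2))
      (fun i _ => ?_) (Finset.mem_univ l))
    · rw [lens_inside hR (by linarith), lens_outside (by linarith), zero_div, sub_zero,
        div_self (by positivity)]
    · have := lens_mono R (y i) (show a ≤ b by linarith)
      rw [sub_nonneg]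
      exact div_le_div_of_nonneg_right this (by positivity)
  unfold absFlux
  nlinarith [abs_nonneg α]

/-- On every radial interval of length `5R` the flux spends a definite amount of time away from
the even integers. -/
lemma far_large (α : ℝ) {N : ℕ} (hN : 2 ≤ N) {R : ℝ} (hR : 0 < R) (y : Fin (N - 2) → Plane)
    (hα : 0 < alphaN α N) {a : ℝ} (ha : R ≤ a) :
    ENNReal.ofReal (R / 32) ≤ volume (farSet (absFlux α R y) (alphaN α N / 7)
      (Icc a (a + 5 * R))) := by
  by_contra hcon
  push Not at hcon
  have h1 := alphaN_le_one α hN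
  obtain ⟨q, hq⟩ := long_const hR (by positivity) (by linarith) (absFlux_mono α R y)
    (absFlux_contOn α hR y) (absFlux_spread α hR y) ha hcon
  by_cases hl : ∃ l, a + 5 * R / 2 - R < ‖y l‖ ∧ ‖y l‖ < a + 5 * R / 2 + R
  · obtain ⟨l, hl1, hl2⟩ := hl
    have h2 := absFlux_of_center α hR y (a := a + R / 16) (b := a + 79 * R / 16) l hl1 hl2
      (by linarith) (by linarith)
    have h3 := hq (a + R / 16) ⟨by linarith, by linarith⟩
    have h4 := hq (a + 79 * R / 16) ⟨by linarith, by linarith⟩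
    rw [abs_le] at h3 h4
    have := alphaN_le_abs α hN
    linarith
  · push Not at hl
    have h2 := absFlux_of_no_center α hN hR y (p := a + 5 * R / 2)
      (fun l => by
        rcases le_or_gt ‖y l‖ (a + 5 * R / 2 - R) with h | h
        · exact Or.inl h
        · exact Or.inr (hl l h)) q
    have h3 := hq (a + 5 * R / 2) ⟨by linarith, by linarith⟩
    linarith

lemma rhoFun_eq (α R : ℝ) {m : ℕ} (y : Fin m → Plane) (r : ℝ) :
    rhoFun α R y r = (α * (1 + 2 * countN R y r)
      - 2 * (round (α * (1 + 2 * countN R y r) / 2) : ℤ)) ^ 2 := by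
  set x := α * (1 + 2 * countN R y r) with hx
  unfold rhoFun
  rw [← hx]
  refine le_antisymm (csInf_le ⟨0, ?_⟩ ⟨_, rfl⟩) (le_csInf ⟨_, 0, rfl⟩ ?_)
  · rintro t ⟨q, rfl⟩; positivity
  · rintro t ⟨q, rfl⟩
    rw [sq_le_sq]
    have h := round_le (x / 2) q
    have e : ∀ z : ℝ, |x - 2 * z| = 2 * |x / 2 - z| := by
      intro z
      rw [← abs_of_pos (two_pos : (0:ℝ) < 2), ← abs_mul, abs_of_pos (two_pos : (0:ℝ) < 2)]
      congr 1; ring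
    rw [e, e]
    linarith

lemma rhoFun_nonneg (α R : ℝ) {m : ℕ} (y : Fin m → Plane) (r : ℝ) : 0 ≤ rhoFun α R y r := by
  rw [rhoFun_eq]; positivity

lemma rhoFun_le_one (α R : ℝ) {m : ℕ} (y : Fin m → Plane) (r : ℝ) : rhoFun α R y r ≤ 1 := by
  rw [rhoFun_eq, sq_le_one_iff_abs_le_one]
  have := abs_sub_round (α * (1 + 2 * countN R y r) / 2)
  rw [abs_le] at this ⊢
  constructor <;> linarith [this.1, this.2]

lemma rhoFun_measurable (α R : ℝ) {m : ℕ} (y : Fin m → Plane) : Measurable (rhoFun α R y) := by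
  have hc : Measurable (countN R y) := (countN_mono R y).measurable
  have h1 : Measurable fun r => α * (1 + 2 * countN R y r) := by fun_prop
  have h2 : Measurable fun r => ((round (α * (1 + 2 * countN R y r) / 2) : ℤ) : ℝ) := by
    simp only [round_eq]
    exact (measurable_from_top (f := fun n : ℤ => (n : ℝ))).comp
      (Int.measurable_floor.comp ((h1.div_const 2).add_const _))
  have : rhoFun α R y = fun r => (α * (1 + 2 * countN R y r)
      - 2 * (round (α * (1 + 2 * countN R y r) / 2) : ℤ)) ^ 2 := funext (rhoFun_eq α R y)
  rw [this]
  exact (h1.sub (h2.const_mul 2)).pow_const 2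

lemma le_rhoFun {α R : ℝ} {m : ℕ} {y : Fin m → Plane} {r ε : ℝ} (hε : 0 ≤ ε)
    (h : ∀ q : ℤ, ε ≤ |absFlux α R y r - 2 * q|) : ε ^ 2 ≤ rhoFun α R y r := by
  rw [rhoFun_eq]
  set q := round (α * (1 + 2 * countN R y r) / 2)
  rw [← sq_abs (_ - _)]
  gcongr
  rcases abs_cases α with ⟨e, -⟩ | ⟨e, -⟩
  · have := h q
    rwa [absFlux, e] at this
  · have := h (-q)
    rw [absFlux, e, ← abs_neg] at this
    refine this.trans_eq (congrArg abs ?_)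
    push_cast
    ring

lemma rhoFun_intervalIntegrable (α R : ℝ) {m : ℕ} (y : Fin m → Plane) (a b : ℝ) :
    IntervalIntegrable (rhoFun α R y) volume a b := by
  refine (intervalIntegrable_const (c := (1:ℝ))).mono_fun
    (rhoFun_measurable α R y).aestronglyMeasurable (ae_of_all _ fun r => ?_)
  simpa [abs_of_nonneg (rhoFun_nonneg α R y r)] using rhoFun_le_one α R y r

/-- Mean lower bound for the effective coupling at scale `R`. -/
lemma rho_integral_lower (α : ℝ) {N : ℕ} (hN : 2 ≤ N) {R : ℝ} (hR : 0 < R)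
    (y : Fin (N - 2) → Plane) {a b : ℝ} (ha : R ≤ a) (hab : a + 5 * R ≤ b) :
    R / 1568 * alphaN α N ^ 2 ≤ ∫ r in a..b, rhoFun α R y r := by
  have hle : a ≤ b := by linarith
  rcases (alphaN_nonneg α N).eq_or_lt with h0 | h0
  · rw [← h0]
    simpa using intervalIntegral.integral_nonneg hle fun r _ => rhoFun_nonneg α R y r
  rw [intervalIntegral.integral_of_le hle]
  have hρint : Integrable (rhoFun α R y) (volume.restrict (Ioc a b)) :=
    (rhoFun_intervalIntegrable α R y a b).1
  have hM := mul_meas_ge_le_integral_of_nonneg (ae_of_all _ fun r => rhoFun_nonneg α R y r)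
    hρint ((alphaN α N / 7) ^ 2)
  refine le_trans ?_ hM
  have hv : R / 32 ≤ ((volume.restrict (Ioc a b)).real
      {x | (alphaN α N / 7) ^ 2 ≤ rhoFun α R y x}) := by
    rw [measureReal_def]
    refine (ENNReal.ofReal_le_iff_le_toReal (measure_ne_top _ _)).1 ?_
    refine (far_large α hN hR y h0 ha).trans ?_
    rw [restrict_Ioc_eq_restrict_Icc]
    rw [Measure.restrict_apply
      (measurableSet_le measurable_const (rhoFun_measurable α R y))]
    refine measure_mono ?_
    rintro r ⟨hr, hf⟩
    exact ⟨le_rhoFun (by positivity) hf, hr.1, hr.2.trans hab⟩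
  calc R / 1568 * alphaN α N ^ 2 = (alphaN α N / 7) ^ 2 * (R / 32) := by ring
    _ ≤ _ := by gcongr

/-! ### From mean bounds on the potential to the radial inequality -/

/-- Fundamental theorem of calculus with Cauchy–Schwarz. -/
lemma norm_sub_sq_le {u u' : ℝ → ℂ} {a b : ℝ} (hab : a < b)
    (hderiv : ∀ r ∈ Icc a b, HasDerivAt u (u' r) r)
    (h1 : IntervalIntegrable u' volume a b)
    (h2 : IntervalIntegrable (fun r => ‖u' r‖ ^ 2) volume a b)
    {s t : ℝ} (hs : s ∈ Icc a b) (ht : t ∈ Icc a b) :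
    ‖u s - u t‖ ^ 2 ≤ (b - a) * ∫ r in a..b, ‖u' r‖ ^ 2 := by
  have hsub : uIcc t s ⊆ Icc a b := ordConnected_Icc.uIcc_subset ht hs
  have hsub' : uIcc t s ⊆ uIcc a b := by rwa [uIcc_of_le hab.le]
  have e1 : u s - u t = ∫ r in t..s, u' r :=
    (intervalIntegral.integral_eq_sub_of_hasDerivAt (fun r hr => hderiv r (hsub hr))
      (h1.mono_set hsub')).symm
  have e2 : ‖u s - u t‖ ≤ ∫ r in a..b, ‖u' r‖ := by
    rw [e1]
    refine intervalIntegral.norm_integral_le_integral_norm_uIoc.trans ?_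
    rw [intervalIntegral.integral_of_le hab.le]
    refine setIntegral_mono_set h1.norm.1 (ae_of_all _ fun r => norm_nonneg _) ?_
    refine LE.le.eventuallyLE ?_
    intro r hr
    rw [← uIoc_of_le hab.le]
    exact uIoc_subset_uIoc_of_uIcc_subset_uIcc hsub' hr
  set X := ∫ r in a..b, ‖u' r‖
  set Y := ∫ r in a..b, ‖u' r‖ ^ 2
  have hl : 0 < b - a := by linarith
  -- integrate `(‖u'‖ - m)² ≥ 0` with `m` the mean of `‖u'‖`
  have hm : 2 * (X / (b - a)) * X ≤ Y + (b - a) * (X / (b - a)) ^ 2 := by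
    have := intervalIntegral.integral_mono_on hab.le (h1.norm.const_mul (2 * (X / (b - a))))
      (h2.add (intervalIntegrable_const (c := (X / (b - a)) ^ 2)))
      fun r _ => by nlinarith [sq_nonneg (‖u' r‖ - X / (b - a))]
    rwa [intervalIntegral.integral_const_mul, intervalIntegral.integral_add h2
      intervalIntegrable_const, intervalIntegral.integral_const, smul_eq_mul] at this
  have hX : X ^ 2 ≤ (b - a) * Y := by
    have h3 : 2 * (X / (b - a)) * X = 2 * (X ^ 2 / (b - a)) := by ring
    have h4 : (b - a) * (X / (b - a)) ^ 2 = X ^ 2 / (b - a) := by field_simp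
    have h5 : X ^ 2 / (b - a) ≤ Y := by linarith
    rw [div_le_iff₀ hl] at h5
    linarith
  calc ‖u s - u t‖ ^ 2 ≤ X ^ 2 := by gcongr
    _ ≤ _ := hX

/-- A potential with a positive mean controls `|u|²` pointwise, up to the kinetic energy. -/
lemma sup_bound {u u' : ℝ → ℂ} {a b : ℝ} (hab : a < b)
    (hderiv : ∀ r ∈ Icc a b, HasDerivAt u (u' r) r)
    (h1 : IntervalIntegrable u' volume a b)
    (h2 : IntervalIntegrable (fun r => ‖u' r‖ ^ 2) volume a b)
    {ρ : ℝ → ℝ} (hρ0 : ∀ r, 0 ≤ ρ r) (hρ : IntervalIntegrable ρ volume a b)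
    {s : ℝ} (hs : s ∈ Icc a b) :
    (∫ r in a..b, ρ r) * ‖u s‖ ^ 2 ≤ 2 * (∫ r in a..b, ρ r * ‖u r‖ ^ 2)
      + (∫ r in a..b, ρ r) * (2 * ((b - a) * ∫ r in a..b, ‖u' r‖ ^ 2)) := by
  have hcu : ContinuousOn (fun r => ‖u r‖ ^ 2) (uIcc a b) := by
    rw [uIcc_of_le hab.le]
    exact ContinuousOn.pow (ContinuousOn.norm fun r hr =>
      (hderiv r hr).continuousAt.continuousWithinAt) 2
  set K := (b - a) * ∫ r in a..b, ‖u' r‖ ^ 2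
  have hρu := hρ.mul_continuousOn hcu
  have := intervalIntegral.integral_mono_on hab.le (hρ.mul_const (‖u s‖ ^ 2))
    ((hρu.const_mul 2).add (hρ.mul_const (2 * K)))
    fun t ht => by
      have hd := norm_sub_sq_le hab hderiv h1 h2 hs ht
      have htri : ‖u s‖ ≤ ‖u t‖ + ‖u s - u t‖ := by
        have := norm_add_le (u t) (u s - u t)
        rwa [add_sub_cancel] at this
      have h3 : ‖u s‖ ^ 2 ≤ 2 * ‖u t‖ ^ 2 + 2 * K := by
        have : ‖u s‖ ^ 2 ≤ (‖u t‖ + ‖u s - u t‖) ^ 2 := by gcongr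
        nlinarith [sq_nonneg (‖u t‖ - ‖u s - u t‖)]
      have := mul_le_mul_of_nonneg_left h3 (hρ0 t)
      calc ρ t * ‖u s‖ ^ 2 ≤ _ := this
        _ = 2 * (ρ t * ‖u t‖ ^ 2) + ρ t * (2 * K) := by ring
  rwa [intervalIntegral.integral_mul_const, intervalIntegral.integral_add
    (hρu.const_mul 2) (hρ.mul_const _), intervalIntegral.integral_const_mul,
    intervalIntegral.integral_mul_const] at this

/-- The radial inequality on a window whose length is comparable to `R`. The numerical conditions
on `c` are far from sharp for the constant `4.7·10⁻⁴ κ / (1 + 2κ)`. -/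
lemma window_bound {u u' : ℝ → ℂ} {R a b κ c A : ℝ} (hR : 0 < R) (ha : R ≤ a)
    (hab1 : a + 5 * R ≤ b) (hab2 : b ≤ a + 10 * R)
    (hderiv : ∀ r ∈ Icc a b, HasDerivAt u (u' r) r)
    (h1 : IntervalIntegrable u' volume a b)
    (h2 : IntervalIntegrable (fun r => ‖u' r‖ ^ 2) volume a b)
    {ρ χ : ℝ → ℝ} (hρ0 : ∀ r, 0 ≤ ρ r) (hρ : IntervalIntegrable ρ volume a b)
    (hP : R / 1568 * A ^ 2 ≤ ∫ r in a..b, ρ r)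
    (hχ1 : ∀ r, χ r ≤ 1)
    (hχ : IntervalIntegrable χ volume a b) (hA1 : A ^ 2 ≤ 1)
    (hc1 : 344960 * c ^ 2 ≤ 1) (hc2 : 200 * c ^ 2 ≤ κ) :
    ∫ r in a..b, ((1 - κ) * ‖u' r‖ ^ 2 + c ^ 2 * A ^ 2 / r ^ 2 * χ r * ‖u r‖ ^ 2) * r
      ≤ ∫ r in a..b, (‖u' r‖ ^ 2 + ρ r / r ^ 2 * ‖u r‖ ^ 2) * r := by
  have hab : a < b := by linarith
  have ha0 : 0 < a := by linarith
  have hI : uIcc a b = Icc a b := uIcc_of_le hab.le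
  have hcu : ContinuousOn (fun r => ‖u r‖ ^ 2) (uIcc a b) := by
    rw [hI]
    exact ContinuousOn.pow (ContinuousOn.norm fun r hr =>
      (hderiv r hr).continuousAt.continuousWithinAt) 2
  have hcur : ContinuousOn (fun r => ‖u r‖ ^ 2 / r) (uIcc a b) := by
    refine hcu.div continuousOn_id fun r hr => ?_
    rw [hI] at hr
    exact (ha0.trans_le hr.1).ne'
  have iρu : IntervalIntegrable (fun r => ρ r * ‖u r‖ ^ 2) volume a b := hρ.mul_continuousOn hcu
  have iρur : IntervalIntegrable (fun r => ρ r * (‖u r‖ ^ 2 / r)) volume a b :=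
    hρ.mul_continuousOn hcur
  have iχur : IntervalIntegrable (fun r => χ r * (‖u r‖ ^ 2 / r)) volume a b :=
    hχ.mul_continuousOn hcur
  have iD : IntervalIntegrable (fun r => ‖u' r‖ ^ 2 * r) volume a b :=
    h2.mul_continuousOn continuousOn_id
  have eL : ∫ r in a..b, ((1 - κ) * ‖u' r‖ ^ 2 + c ^ 2 * A ^ 2 / r ^ 2 * χ r * ‖u r‖ ^ 2) * r
      = (1 - κ) * (∫ r in a..b, ‖u' r‖ ^ 2 * r)
        + c ^ 2 * A ^ 2 * ∫ r in a..b, χ r * (‖u r‖ ^ 2 / r) := by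
    rw [← intervalIntegral.integral_const_mul, ← intervalIntegral.integral_const_mul,
      ← intervalIntegral.integral_add (iD.const_mul _) (iχur.const_mul _)]
    refine intervalIntegral.integral_congr fun r hr => ?_
    rw [hI] at hr
    have : r ≠ 0 := (ha0.trans_le hr.1).ne'
    field_simp
  have eR : ∫ r in a..b, (‖u' r‖ ^ 2 + ρ r / r ^ 2 * ‖u r‖ ^ 2) * r
      = (∫ r in a..b, ‖u' r‖ ^ 2 * r) + ∫ r in a..b, ρ r * (‖u r‖ ^ 2 / r) := by
    rw [← intervalIntegral.integral_add iD iρur]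
    refine intervalIntegral.integral_congr fun r hr => ?_
    rw [hI] at hr
    have : r ≠ 0 := (ha0.trans_le hr.1).ne'
    field_simp
  rw [eL, eR]
  have hsup := fun s hs => sup_bound hab hderiv h1 h2 hρ0 hρ (s := s) hs
  have hD : a * (∫ r in a..b, ‖u' r‖ ^ 2) ≤ ∫ r in a..b, ‖u' r‖ ^ 2 * r := by
    rw [← intervalIntegral.integral_const_mul]
    refine intervalIntegral.integral_mono_on hab.le (h2.const_mul a) iD fun r hr => ?_
    nlinarith [hr.1, sq_nonneg ‖u' r‖]
  have hQ : (∫ r in a..b, ρ r * ‖u r‖ ^ 2) ≤ b * ∫ r in a..b, ρ r * (‖u r‖ ^ 2 / r) := by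
    rw [← intervalIntegral.integral_const_mul]
    refine intervalIntegral.integral_mono_on hab.le iρu (iρur.const_mul b) fun r hr => ?_
    have hr0 : 0 < r := ha0.trans_le hr.1
    have h3 : ρ r * ‖u r‖ ^ 2 = r * (ρ r * (‖u r‖ ^ 2 / r)) := by field_simp
    have h4 : 0 ≤ ρ r * (‖u r‖ ^ 2 / r) := mul_nonneg (hρ0 r) (by positivity)
    rw [h3]
    exact mul_le_mul_of_nonneg_right hr.2 h4
  have hQ0 : 0 ≤ ∫ r in a..b, ρ r * ‖u r‖ ^ 2 :=
    intervalIntegral.integral_nonneg hab.le fun r _ => mul_nonneg (hρ0 r) (by positivity)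
  have hQ'0 : 0 ≤ ∫ r in a..b, ρ r * (‖u r‖ ^ 2 / r) :=
    intervalIntegral.integral_nonneg hab.le fun r hr =>
      mul_nonneg (hρ0 r) (div_nonneg (by positivity) (ha0.le.trans hr.1))
  have hD0 : 0 ≤ ∫ r in a..b, ‖u' r‖ ^ 2 :=
    intervalIntegral.integral_nonneg hab.le fun r _ => by positivity
  set P := ∫ r in a..b, ρ r
  set Q := ∫ r in a..b, ρ r * ‖u r‖ ^ 2
  set Q' := ∫ r in a..b, ρ r * (‖u r‖ ^ 2 / r)
  set D := ∫ r in a..b, ‖u' r‖ ^ 2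
  set D' := ∫ r in a..b, ‖u' r‖ ^ 2 * r
  have hP0 : 0 ≤ P := le_trans (by positivity) hP
  -- the bound `A² ‖u‖² ≤ B` on the window
  have hB : ∀ r ∈ Icc a b, A ^ 2 * ‖u r‖ ^ 2 ≤ 3136 / R * Q + 2 * ((b - a) * D) := by
    intro r hr
    have hk0 : 0 ≤ 2 * ((b - a) * D) :=
      mul_nonneg zero_le_two (mul_nonneg (by linarith) hD0)
    have h3 : 0 ≤ 3136 / R * Q := by positivity
    by_cases hlt : ‖u r‖ ^ 2 ≤ 2 * ((b - a) * D)
    · have : A ^ 2 * ‖u r‖ ^ 2 ≤ 1 * ‖u r‖ ^ 2 := by gcongr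
      linarith
    · push Not at hlt
      have h4 := hsup r hr
      have h5 : P * (‖u r‖ ^ 2 - 2 * ((b - a) * D)) ≤ 2 * Q := by linarith
      have h6 : R / 1568 * A ^ 2 * (‖u r‖ ^ 2 - 2 * ((b - a) * D)) ≤ 2 * Q :=
        (mul_le_mul_of_nonneg_right hP (by linarith)).trans h5
      have h7 : A ^ 2 * (‖u r‖ ^ 2 - 2 * ((b - a) * D)) ≤ 3136 / R * Q := by
        calc A ^ 2 * (‖u r‖ ^ 2 - 2 * ((b - a) * D))
            = 1568 / R * (R / 1568 * A ^ 2 * (‖u r‖ ^ 2 - 2 * ((b - a) * D))) := by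
              field_simp
          _ ≤ 1568 / R * (2 * Q) := by gcongr
          _ = _ := by ring
      have h8 : A ^ 2 * (2 * ((b - a) * D)) ≤ 1 * (2 * ((b - a) * D)) := by gcongr
      linarith
  set B := 3136 / R * Q + 2 * ((b - a) * D)
  have hM : A ^ 2 * (∫ r in a..b, χ r * (‖u r‖ ^ 2 / r)) ≤ (b - a) * (B / a) := by
    have := intervalIntegral.integral_mono_on hab.le (iχur.const_mul (A ^ 2))
      (intervalIntegrable_const (c := B / a)) fun r hr => by
        have hr0 : 0 < r := ha0.trans_le hr.1
        calc A ^ 2 * (χ r * (‖u r‖ ^ 2 / r)) ≤ A ^ 2 * (1 * (‖u r‖ ^ 2 / r)) := by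
              gcongr; exact hχ1 r
          _ = A ^ 2 * ‖u r‖ ^ 2 / r := by ring
          _ ≤ B / r := by gcongr; exact hB r hr
          _ ≤ B / a := by
              have : 0 ≤ B := le_trans (by positivity) (hB r hr)
              gcongr
              exact hr.1
    rwa [intervalIntegral.integral_const_mul, intervalIntegral.integral_const, smul_eq_mul] at this
  have hba : b ≤ 11 * a := by linarith
  have hl : b - a ≤ 10 * R := by linarith
  have hla : b - a ≤ 10 * a := by linarith
  have t1 : (b - a) * (3136 / R * Q / a) ≤ 344960 * Q' := by
    calc (b - a) * (3136 / R * Q / a) ≤ (10 * R) * (3136 / R * Q / a) := by gcongr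
      _ = 31360 * Q / a := by field_simp; ring
      _ ≤ 31360 * (b * Q') / a := by gcongr
      _ ≤ 31360 * (11 * a * Q') / a := by gcongr
      _ = 344960 * Q' := by field_simp; ring
  have t2 : (b - a) * (2 * ((b - a) * D) / a) ≤ 200 * D' := by
    have hl0 : 0 ≤ b - a := by linarith
    calc (b - a) * (2 * ((b - a) * D) / a) ≤ (10 * a) * (2 * ((10 * a) * D) / a) := by gcongr
      _ = 200 * (a * D) := by field_simp; ring
      _ ≤ _ := by gcongr
  have hD'0 : 0 ≤ D' := le_trans (by positivity) hD
  have hM2 : A ^ 2 * (∫ r in a..b, χ r * (‖u r‖ ^ 2 / r)) ≤ 344960 * Q' + 200 * D' := by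
    refine hM.trans ?_
    have : (b - a) * (B / a)
        = (b - a) * (3136 / R * Q / a) + (b - a) * (2 * ((b - a) * D) / a) := by
      simp only [B]; ring
    linarith
  have f1 := mul_le_mul_of_nonneg_left hM2 (sq_nonneg c)
  have f2 := mul_le_mul_of_nonneg_right hc1 hQ'0
  have f3 := mul_le_mul_of_nonneg_right hc2 hD'0
  nlinarith

/-! ### Assembling the windows -/


/-- **Main radial bound** (Theorem 4.1).  For `α ∈ ℝ`, `N ≥ 2`, arbitrary
`y_1, …, y_{N-2} ∈ ℝ²`, `0 < R ≤ L/6`, `κ ∈ [0,1]`, `c(κ) = 4.7·10⁻⁴ κ/(1+2κ)` and every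
`u ∈ W^{1,2}([R,L], r dr)`:
`∫_R^L (|u'|² + ρ r⁻² |u|²) r dr ≥ ∫_R^L ((1-κ)|u'|² + c(κ)² α_N² r⁻² 1_{[3R,L-3R]} |u|²) r dr`. -/
theorem main_radial_bound
    (α : ℝ) (N : ℕ) (hN : 2 ≤ N) (y : Fin (N - 2) → Plane)
    (R L : ℝ) (hR : 0 < R) (hRL : R ≤ L / 6)
    (κ : ℝ) (hκ : κ ∈ Set.Icc (0:ℝ) 1)
    (u u' : ℝ → ℂ)
    (hderiv : ∀ r ∈ Set.Icc R L, HasDerivAt u (u' r) r)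
    (hW12 : IntervalIntegrable (fun r => (‖u r‖ ^ 2 + ‖u' r‖ ^ 2) * r) volume R L) :
    ∫ r in R..L, ((1 - κ) * ‖u' r‖ ^ 2
        + (4.7e-4 * κ / (1 + 2 * κ)) ^ 2 * alphaN α N ^ 2 / r ^ 2
          * Set.indicator (Set.Icc (3 * R) (L - 3 * R)) (fun _ => (1:ℝ)) r
          * ‖u r‖ ^ 2) * r
    ≤ ∫ r in R..L, (‖u' r‖ ^ 2 + rhoFun α R y r / r ^ 2 * ‖u r‖ ^ 2) * r := by
  obtain ⟨hκ0, hκ1⟩ := hκ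
  have hRL' : R ≤ L := by linarith
  have hI : uIcc R L = Icc R L := uIcc_of_le hRL'
  have hcu : ContinuousOn (fun r => ‖u r‖ ^ 2) (uIcc R L) := by
    rw [hI]
    exact ContinuousOn.pow (ContinuousOn.norm fun r hr =>
      (hderiv r hr).continuousAt.continuousWithinAt) 2
  have hinv : ContinuousOn (fun r : ℝ => r⁻¹) (uIcc R L) := by
    refine continuousOn_inv₀.mono fun r hr => ?_
    rw [hI] at hr
    exact (hR.trans_le hr.1).ne'
  have hne : ∀ r ∈ uIcc R L, r ≠ 0 := fun r hr => by
    rw [hI] at hr; exact (hR.trans_le hr.1).ne'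
  have i2 : IntervalIntegrable (fun r => ‖u' r‖ ^ 2) volume R L := by
    refine ((hW12.mul_continuousOn hinv).sub hcu.intervalIntegrable).congr_uIoo ?_
    intro r hr
    have := hne r (Ioo_subset_Icc_self hr)
    field_simp
    ring
  have i1 : IntervalIntegrable u' volume R L := by
    have hm : AEStronglyMeasurable u' (volume.restrict (uIoc R L)) := by
      refine (stronglyMeasurable_deriv u).aestronglyMeasurable.congr ?_
      refine (ae_restrict_iff' measurableSet_uIoc).2 (ae_of_all _ fun r hr => ?_)
      rw [uIoc_of_le hRL'] at hr
      exact (hderiv r ⟨hr.1.le, hr.2⟩).deriv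
    refine ((intervalIntegrable_const (c := (1:ℝ))).add i2).mono_fun hm (ae_of_all _ fun r => ?_)
    show ‖u' r‖ ≤ ‖(1:ℝ) + ‖u' r‖ ^ 2‖
    rw [Real.norm_of_nonneg (by positivity)]
    nlinarith [sq_nonneg (‖u' r‖ - 1), norm_nonneg (u' r)]
  set χ : ℝ → ℝ := Set.indicator (Set.Icc (3 * R) (L - 3 * R)) (fun _ => (1:ℝ)) with hχdef
  have hχm : Measurable χ := measurable_const.indicator measurableSet_Icc
  have hχ0 : ∀ r, 0 ≤ χ r := fun r => Set.indicator_nonneg (fun _ _ => zero_le_one) r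
  have hχ1 : ∀ r, χ r ≤ 1 := fun r =>
    Set.indicator_le_self' (s := Set.Icc (3 * R) (L - 3 * R)) (f := fun _ => (1:ℝ))
      (fun _ _ => zero_le_one) r
  have hχi : ∀ a b, IntervalIntegrable χ volume a b := fun a b => by
    refine (intervalIntegrable_const (c := (1:ℝ))).mono_fun hχm.aestronglyMeasurable
      (ae_of_all _ fun r => ?_)
    simpa [abs_of_nonneg (hχ0 r)] using hχ1 r
  have hρi := rhoFun_intervalIntegrable α R y
  set c := 4.7e-4 * κ / (1 + 2 * κ) with hc
  have hcκ : c ^ 2 ≤ (4.7e-4 * κ) ^ 2 := by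
    have hc0 : 0 ≤ c := by positivity
    have : c ≤ 4.7e-4 * κ := div_le_self (by positivity) (by linarith)
    gcongr
  have hc2 : 200 * c ^ 2 ≤ κ := by nlinarith
  have hc1 : 344960 * c ^ 2 ≤ 1 := by nlinarith
  -- integrability of both sides
  have iL : IntervalIntegrable (fun r => ((1 - κ) * ‖u' r‖ ^ 2
        + c ^ 2 * alphaN α N ^ 2 / r ^ 2 * χ r * ‖u r‖ ^ 2) * r) volume R L := by
    refine (((i2.mul_continuousOn continuousOn_id).const_mul (1 - κ)).add
      (((hχi R L).mul_continuousOn (hcu.mul hinv)).const_mul (c ^ 2 * alphaN α N ^ 2))).congr_uIoo ?_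
    intro r hr
    have := hne r (Ioo_subset_Icc_self hr)
    simp only [id, Pi.mul_apply]
    field_simp
  have iR : IntervalIntegrable (fun r => (‖u' r‖ ^ 2 + rhoFun α R y r / r ^ 2 * ‖u r‖ ^ 2) * r)
      volume R L := by
    refine ((i2.mul_continuousOn continuousOn_id).add
      ((hρi R L).mul_continuousOn (hcu.mul hinv))).congr_uIoo ?_
    intro r hr
    have := hne r (Ioo_subset_Icc_self hr)
    simp only [id, Pi.mul_apply]
    field_simp
  -- `[R, L]` is cut into `n` windows of equal length `ℓ ∈ [5R, 10R]`
  set n : ℕ := ⌊(L - R) / (5 * R)⌋₊ with hn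
  have hq1 : 1 ≤ (L - R) / (5 * R) := by
    rw [le_div_iff₀ (by positivity)]; linarith
  have hn1 : 1 ≤ n := Nat.le_floor (by simpa using hq1)
  have hn1' : (1:ℝ) ≤ n := by exact_mod_cast hn1
  have hn0 : (0:ℝ) < n := by linarith
  have hnle : (n : ℝ) * (5 * R) ≤ L - R := by
    rw [← le_div_iff₀ (by positivity)]; exact Nat.floor_le (by linarith)
  have hnlt : L - R < (n + 1) * (5 * R) := by
    rw [← div_lt_iff₀ (by positivity)]; exact Nat.lt_floor_add_one _
  set ℓ := (L - R) / n with hℓ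
  have hℓ1 : 5 * R ≤ ℓ := by rw [hℓ, le_div_iff₀ hn0]; linarith
  have hℓ2 : ℓ ≤ 10 * R := by
    rw [hℓ, div_le_iff₀ hn0]; nlinarith
  have hnℓ : n * ℓ = L - R := by rw [hℓ]; field_simp
  let x : ℕ → ℝ := fun k => R + k * ℓ
  have hx0 : x 0 = R := by simp [x]
  have hxn : x n = L := by simp only [x]; linarith
  have hxs : ∀ k, x (k + 1) = x k + ℓ := fun k => by simp only [x]; push_cast; ring
  have hxR : ∀ k, R ≤ x k := fun k => by
    have : 0 ≤ (k : ℝ) * ℓ := mul_nonneg (Nat.cast_nonneg k) (by linarith)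
    simp only [x]; linarith
  have hxL : ∀ k, k ≤ n → x k ≤ L := fun k hk => by
    rw [← hxn]
    have : (k : ℝ) * ℓ ≤ n * ℓ := by
      have : (k : ℝ) ≤ n := by exact_mod_cast hk
      have : 0 ≤ ℓ := by linarith
      gcongr
    simp only [x]; linarith
  have hsub : ∀ k < n, uIcc (x k) (x (k + 1)) ⊆ uIcc R L := fun k hk => by
    rw [hI, uIcc_of_le (by rw [hxs]; linarith)]
    exact Icc_subset_Icc (hxR k) (hxL _ hk)
  have sL := intervalIntegral.sum_integral_adjacent_intervals (a := x) (n := n)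
    fun k hk => iL.mono_set (hsub k hk)
  have sR := intervalIntegral.sum_integral_adjacent_intervals (a := x) (n := n)
    fun k hk => iR.mono_set (hsub k hk)
  rw [hx0, hxn] at sL sR
  rw [← sL, ← sR]
  refine Finset.sum_le_sum fun k hk => ?_
  have hk := Finset.mem_range.1 hk
  have hN1 := alphaN_le_one α hN
  have hN0 := alphaN_nonneg α N
  have hlen : x k + 5 * R ≤ x (k + 1) := by rw [hxs]; linarith
  exact window_bound hR (hxR k) hlen (by rw [hxs]; linarith)
    (fun r hr => hderiv r ⟨(hxR k).trans hr.1, hr.2.trans (hxL _ hk)⟩)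
    (i1.mono_set (hsub k hk)) (i2.mono_set (hsub k hk)) (rhoFun_nonneg α R y)
    (hρi _ _) (rho_integral_lower α hN hR y (hxR k) hlen) hχ1 (hχi _ _)
    (pow_le_one₀ hN0 hN1) hc1 hc2
end
end

section
/- Let R > 0, let y_1,…,y_m ∈ ℝ², and set 𝒩'(r) := Σ_{l=1}^m f(|y_l|, r), where f is the one-particle profile. If r₁ ≥ R, r₂ − r₁ ≤ R/2, and r ∈ [r₁, r₂], then 𝒩'(r₁) + 𝒩'(r₂) ≥ 𝒩'(r). (Shape lemma, Lemma 4.7.) -/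
/-!
The inequality holds term by term, for each distance `d = ‖y l‖`. The case `d = 0` is immediate.
For `d > 0` and `r ≥ R`, scaling to `R = 1` turns the profile into a constant multiple of
`h d r = r * θ`, where `θ` is the angle at the origin `O` of the triangle `O Y P` with `|OY| = d`,
`|OP| = r`, `|YP| = 1` (`θ = 0` when there is no such triangle); see `profile_eq_hArc`.

If `φ` is the angle at `P`, then `∂h/∂r = θ - cot φ`, and the second derivative is a negative
multiple of `r - cos³ φ`. Hence `h d` is concave on `[1, d+1]` for `d ≤ 2`, and on `[d-1, d+1]`
for `d > 1`, see `concaveOn_hArc`.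

The sign of `∂h/∂r` at `d + 1/2` (or at `1`, if `d ≤ 1/2`) and, for `d ≥ 5/4`, at `d - 1/2` locates
the maximum `p` of `h d`: it lies at distance at least `1/2` from the right end `d + 1` of the
support, unless `p = 1`, and at least `1/2` from the left end `d - 1` if `d ≥ 5/4`. Consequently
`h d` is unimodal and, on both sides of `p` if `p > 1`, lies above the tent
`h d p * (1 - 2 * |x - p|)`. If `r₁, r₂` are on the same side of `p`, monotonicity gives
`h d r ≤ max (h d r₁) (h d r₂)`. Otherwise the two values of the tent at `r₁, r₂` add up to
`h d p * (2 - 2 * (r₂ - r₁)) ≥ h d p ≥ h d r`; see `le_add_of_tent`.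

For `d ≤ 5/4` the left half of the tent bound does not come from concavity (the domain `[1, ∞)`
may cut the support) but from the monotonicity of `θ`, which gives `h d x ≥ h d p * (x / p)`.
-/

open MeasureTheory Real Set

noncomputable section

/-- The one-particle profile `f(d,r)`: `2r/R²` for `r ≤ R - d`; `0` for `r > R + d` or
`r < d - R`; and `(2r/(πR²)) arccos((d²+r²-R²)/(2dr))` otherwise. -/
def profile (R d r : ℝ) : ℝ :=
  if r ≤ R - d then 2 * r / R ^ 2
  else if R + d < r ∨ r < d - R then 0
  else 2 * r / (π * R ^ 2) * Real.arccos ((d ^ 2 + r ^ 2 - R ^ 2) / (2 * d * r))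

/-! ### The normalized profile and its derivatives -/

/-- Half the length of the part of the circle of radius `r` about the origin that lies in the unit
disc centred at distance `d`. The truncation of `arccos` outside `[-1, 1]` gives the value `0`
when `r ≥ d + 1` or `r ≤ d - 1`. -/
def hArc (d r : ℝ) : ℝ := r * Real.arccos ((d ^ 2 + r ^ 2 - 1) / (2 * d * r))

/-- The derivative of `hArc d` at `r`, that is `θ - cot φ` for the angles `θ` at the origin and `φ`
at the opposite end of the side of length `r`, in the triangle with sides `d`, `r`, `1`. -/
def hArcD (d r : ℝ) : ℝ :=
  Real.arccos ((d ^ 2 + r ^ 2 - 1) / (2 * d * r)) -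
    (r ^ 2 - d ^ 2 + 1) / √(4 * r ^ 2 - (r ^ 2 - d ^ 2 + 1) ^ 2)

lemma hArc_nonneg {d r : ℝ} (hr : 0 ≤ r) : 0 ≤ hArc d r :=
  mul_nonneg hr (Real.arccos_nonneg _)

/-- Sixteen times the squared area of the triangle with sides `d`, `r`, `1` is positive. -/
lemma heron_pos {d r : ℝ} (h1 : |d - 1| < r) (h2 : r < d + 1) :
    0 < 4 * r ^ 2 - (r ^ 2 - d ^ 2 + 1) ^ 2 := by
  obtain ⟨h3, h4⟩ := abs_lt.1 h1
  have : 4 * r ^ 2 - (r ^ 2 - d ^ 2 + 1) ^ 2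
      = ((r + 1 - d) * (r - 1 + d)) * ((d + 1 - r) * (r + 1 + d)) := by ring
  rw [this]
  have : 0 < r := (abs_nonneg _).trans_lt h1
  have h5 : 0 < r + 1 - d := by linarith
  have h6 : 0 < r - 1 + d := by linarith
  have h7 : 0 < d + 1 - r := by linarith
  have h8 : 0 < r + 1 + d := by linarith
  positivity

lemma one_sub_cos_sq {d r : ℝ} (hd : 0 < d) (hr : 0 < r) :
    1 - ((d ^ 2 + r ^ 2 - 1) / (2 * d * r)) ^ 2
      = (4 * r ^ 2 - (r ^ 2 - d ^ 2 + 1) ^ 2) / (2 * d * r) ^ 2 := by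
  field_simp
  ring

lemma hasDerivAt_cos {d r : ℝ} (hd : 0 < d) (hr : 0 < r) :
    HasDerivAt (fun r : ℝ => (d ^ 2 + r ^ 2 - 1) / (2 * d * r))
      ((r ^ 2 - d ^ 2 + 1) / (2 * d * r ^ 2)) r := by
  have h1 : HasDerivAt (fun r : ℝ => d ^ 2 + r ^ 2 - 1) (2 * r) r := by
    simpa using (((hasDerivAt_id r).pow 2).const_add (d ^ 2)).sub_const 1
  have h2 : HasDerivAt (fun r : ℝ => 2 * d * r) (2 * d) r := by
    simpa using (hasDerivAt_id r).const_mul (2 * d)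
  refine (h1.div h2 (by positivity)).congr_deriv ?_
  field_simp
  ring

lemma hasDerivAt_arccos_cos {d r : ℝ} (hd : 0 < d) (h1 : |d - 1| < r) (h2 : r < d + 1) :
    HasDerivAt (fun r : ℝ => Real.arccos ((d ^ 2 + r ^ 2 - 1) / (2 * d * r)))
      (-((r ^ 2 - d ^ 2 + 1) / (r * √(4 * r ^ 2 - (r ^ 2 - d ^ 2 + 1) ^ 2)))) r := by
  have hr : 0 < r := (abs_nonneg _).trans_lt h1
  have hS := heron_pos h1 h2
  have hc := one_sub_cos_sq hd hr
  have hpos : 0 < 1 - ((d ^ 2 + r ^ 2 - 1) / (2 * d * r)) ^ 2 := by rw [hc]; positivity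
  have hne1 : (d ^ 2 + r ^ 2 - 1) / (2 * d * r) ≠ -1 := by
    intro h; rw [h] at hpos; norm_num at hpos
  have hne2 : (d ^ 2 + r ^ 2 - 1) / (2 * d * r) ≠ 1 := by
    intro h; rw [h] at hpos; norm_num at hpos
  refine ((Real.hasDerivAt_arccos hne1 hne2).comp r (hasDerivAt_cos hd hr)).congr_deriv ?_
  rw [hc, Real.sqrt_div hS.le, Real.sqrt_sq (by positivity)]
  have := Real.sqrt_pos.2 hS
  field_simp

lemma hasDerivAt_hArc {d r : ℝ} (hd : 0 < d) (h1 : |d - 1| < r) (h2 : r < d + 1) :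
    HasDerivAt (hArc d) (hArcD d r) r := by
  have hr : 0 < r := (abs_nonneg _).trans_lt h1
  have := Real.sqrt_pos.2 (heron_pos h1 h2)
  refine ((hasDerivAt_id r).mul (hasDerivAt_arccos_cos hd h1 h2)).congr_deriv ?_
  simp only [hArcD, id]
  field_simp
  ring

lemma hasDerivAt_hArcD {d r : ℝ} (hd : 0 < d) (h1 : |d - 1| < r) (h2 : r < d + 1) :
    HasDerivAt (hArcD d)
      (-((8 * r ^ 4 - (r ^ 2 - d ^ 2 + 1) ^ 3) /
        (r * √(4 * r ^ 2 - (r ^ 2 - d ^ 2 + 1) ^ 2) ^ 3))) r := by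
  have hr : 0 < r := (abs_nonneg _).trans_lt h1
  have hS := heron_pos h1 h2
  have hs := Real.sqrt_pos.2 hS
  have hsq := Real.sq_sqrt hS.le
  have hA : HasDerivAt (fun r : ℝ => r ^ 2 - d ^ 2 + 1) (2 * r) r := by
    simpa using (((hasDerivAt_id r).pow 2).sub_const (d ^ 2)).add_const 1
  have hB : HasDerivAt (fun r : ℝ => 4 * r ^ 2) (8 * r) r := by
    refine (((hasDerivAt_id r).pow 2).const_mul 4).congr_deriv ?_
    simp; ring
  have hQ := (hB.sub (hA.pow 2)).sqrt hS.ne'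
  refine ((hasDerivAt_arccos_cos hd h1 h2).sub (hA.div hQ hs.ne')).congr_deriv ?_
  simp only [Pi.sub_apply, Pi.pow_apply]
  generalize √(4 * r ^ 2 - (r ^ 2 - d ^ 2 + 1) ^ 2) = s at *
  field_simp
  push_cast
  rw [hsq]
  ring

lemma continuousOn_hArc {d : ℝ} (hd : 0 < d) : ContinuousOn (hArc d) (Ioi 0) := by
  unfold hArc
  refine continuousOn_id.mul (Real.continuous_arccos.comp_continuousOn ?_)
  refine ContinuousOn.div (by fun_prop) (by fun_prop) fun x hx => ?_
  have : 0 < x := hx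
  positivity

/-- With `A = r² - d² + 1 = 2 r cos φ`, the second derivative is nonpositive iff `A³ ≤ 8 r⁴`. This
follows from `A ≤ 2 r` and `A ≤ 2 r²`; the latter holds when `r ≥ 1` or `d ≥ 1`. -/
lemma concaveOn_hArc {d a : ℝ} (hd : 0 < d) (ha : 0 < a) (h1 : |d - 1| ≤ a)
    (h : 1 ≤ a ∨ 1 ≤ d) : ConcaveOn ℝ (Icc a (d + 1)) (hArc d) := by
  refine concaveOn_of_hasDerivWithinAt2_nonpos (f' := hArcD d)
    (f'' := fun r => (-((8 * r ^ 4 - (r ^ 2 - d ^ 2 + 1) ^ 3) /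
        (r * √(4 * r ^ 2 - (r ^ 2 - d ^ 2 + 1) ^ 2) ^ 3)))) (convex_Icc _ _) ?_ ?_ ?_ ?_
  · exact (continuousOn_hArc hd).mono fun x (hx : x ∈ Icc a (d + 1)) => ha.trans_le hx.1
  · intro x hx
    rw [interior_Icc] at hx
    exact (hasDerivAt_hArc hd (h1.trans_lt hx.1) hx.2).hasDerivWithinAt
  · intro x hx
    rw [interior_Icc] at hx
    exact (hasDerivAt_hArcD hd (h1.trans_lt hx.1) hx.2).hasDerivWithinAt
  · intro x hx
    rw [interior_Icc] at hx
    have hx0 : 0 < x := ha.trans hx.1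
    have hS := heron_pos (h1.trans_lt hx.1) hx.2
    simp only [neg_nonpos]
    refine div_nonneg ?_ (by positivity)
    set A := x ^ 2 - d ^ 2 + 1 with hA
    have hA2 : A ≤ 2 * x := by nlinarith
    have hAx : A ≤ 2 * x ^ 2 := by
      rcases h with h | h
      · nlinarith [hx.1]
      · nlinarith
    by_cases h0 : A ≤ 0
    · have : A ^ 3 ≤ 0 := by
        have := mul_nonpos_of_nonneg_of_nonpos (sq_nonneg A) h0
        linarith [this, pow_succ A 2]
      have : 0 < x ^ 4 := by positivity
      linarith
    · push Not at h0
      nlinarith [mul_le_mul (show A ^ 2 ≤ 4 * x ^ 2 by linarith) hAx h0.le (by positivity)]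

lemma hArc_eq_zero {d r : ℝ} (hd : 0 < d) (hr : 0 < r) (h : d + 1 ≤ r ∨ r ≤ d - 1) :
    hArc d r = 0 := by
  have : 1 ≤ (d ^ 2 + r ^ 2 - 1) / (2 * d * r) := by
    rw [le_div_iff₀ (by positivity)]
    rcases h with h | h <;> nlinarith
  rw [hArc, Real.arccos_of_one_le this, mul_zero]

/-! ### Location of the maximum -/

lemma hArcD_nonpos {d : ℝ} (hd : 1 / 2 ≤ d) : hArcD d (d + 1 / 2) ≤ 0 := by
  have hS := heron_pos (d := d) (r := d + 1 / 2) (abs_lt.2 ⟨by linarith, by linarith⟩) (by linarith)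
  have hc := one_sub_cos_sq (d := d) (r := d + 1 / 2) (by linarith) (by linarith)
  have hs := Real.sqrt_pos.2 hS
  have hsq := Real.sq_sqrt hS.le
  set s := √(4 * (d + 1 / 2) ^ 2 - ((d + 1 / 2) ^ 2 - d ^ 2 + 1) ^ 2) with hsdef
  rw [hArcD, ← hsdef, sub_nonpos]
  set c := (d ^ 2 + (d + 1 / 2) ^ 2 - 1) / (2 * d * (d + 1 / 2)) with hcdef
  have hden : 0 < 2 * d * (d + 1 / 2) := by nlinarith
  have hc14 : 1 / 4 ≤ c := by
    rw [hcdef, le_div_iff₀ hden]; nlinarith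
  have hc1 : c < 1 := by
    rw [hcdef, div_lt_one hden]; nlinarith
  -- The bound `θ ≤ tan θ` suffices exactly for `d ≥ 3/4`; below that, `θ ≤ π/2 - cos θ` with
  -- `cos θ ≥ 1/4` gives `θ ≤ 4/3 ≤ cot φ`.
  rcases le_total d (3 / 4) with h | h
  · have h43 : 4 / 3 ≤ ((d + 1 / 2) ^ 2 - d ^ 2 + 1) / s := by
      rw [le_div_iff₀ hs]
      nlinarith
    have : Real.arccos c ≤ 4 / 3 := by
      rw [Real.arccos_eq_pi_div_two_sub_arcsin]
      have : c ≤ Real.arcsin c := by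
        rw [Real.le_arcsin_iff_sin_le' ⟨by linarith [pi_gt_three], by linarith [pi_gt_three]⟩]
        exact Real.sin_le (by linarith)
      linarith [Real.pi_lt_d4]
    linarith
  · have h1 : Real.arccos c ≤ Real.tan (Real.arccos c) := by
      refine Real.le_tan (Real.arccos_nonneg _) ?_
      exact Real.arccos_lt_pi_div_two.2 (by linarith)
    refine h1.trans ?_
    rw [Real.tan_arccos, hc, Real.sqrt_div hS.le, Real.sqrt_sq hden.le, ← hsdef, hcdef,
      div_div_div_cancel_right₀ hden.ne']
    rw [div_le_div_iff₀ (by nlinarith) hs, ← sq, hsq]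
    nlinarith [mul_nonneg (sub_nonneg.2 h) (sq_nonneg d),
      mul_nonneg (sub_nonneg.2 h) (sub_nonneg.2 h), mul_nonneg (mul_nonneg (sub_nonneg.2 h) (sub_nonneg.2 h)) (sub_nonneg.2 h)]

lemma hArcD_one_nonpos {d : ℝ} (hd0 : 0 < d) (hd : d ≤ 1 / 2) : hArcD d 1 ≤ 0 := by
  have hS := heron_pos (d := d) (r := 1) (abs_lt.2 ⟨by linarith, by linarith⟩) (by linarith)
  have hs := Real.sqrt_pos.2 hS
  have hsq := Real.sq_sqrt hS.le
  rw [hArcD, sub_nonpos]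
  have h1 : Real.arccos ((d ^ 2 + 1 ^ 2 - 1) / (2 * d * 1)) ≤ π / 2 := by
    rw [Real.arccos_le_pi_div_two]
    have : 0 ≤ d ^ 2 + 1 ^ 2 - 1 := by nlinarith
    positivity
  refine h1.trans ?_
  rw [le_div_iff₀ hs]
  have : π / 2 < 8 / 5 := by linarith [Real.pi_lt_d2]
  have hd2 : d ^ 2 ≤ 1 / 4 := by nlinarith
  have h2 : 8 / 5 * √(4 * 1 ^ 2 - (1 ^ 2 - d ^ 2 + 1) ^ 2) ≤ 1 ^ 2 - d ^ 2 + 1 := by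
    apply le_of_sq_le_sq _ (by nlinarith)
    rw [mul_pow, hsq]
    nlinarith
  exact (mul_le_mul_of_nonneg_right this.le hs.le).trans h2

/-- For `d ≥ 5/4` the angle `φ` at `r = d - 1/2` is at least a right angle, so `cot φ ≤ 0`. -/
lemma hArcD_nonneg {d : ℝ} (hd : 5 / 4 ≤ d) : 0 ≤ hArcD d (d - 1 / 2) := by
  rw [hArcD, sub_nonneg]
  exact (div_nonpos_of_nonpos_of_nonneg (by nlinarith) (Real.sqrt_nonneg _)).trans
    (Real.arccos_nonneg _)


/-! ### Concave functions and tents -/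

/-- A nonnegative function on `[1, ∞)` that is unimodal with peak at `p` and lies above the tent of
half-width `1/2` centred at `p` satisfies the shape inequality. The right half of the tent is
needed only if `1 < p`, since for `p ≤ 1` no point of the domain lies left of the peak. -/
lemma le_add_of_tent {F : ℝ → ℝ} {p r₁ r₂ r : ℝ} (hF : ∀ x, 1 ≤ x → 0 ≤ F x)
    (hL : ∀ x y, 1 ≤ x → x ≤ y → y ≤ p → F x ≤ F y)
    (hR : ∀ x y, p ≤ x → x ≤ y → F y ≤ F x)
    (hTL : ∀ x, 1 ≤ x → x ≤ p → F p * (1 - 2 * (p - x)) ≤ F x)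
    (hTR : ∀ x, 1 < p → p ≤ x → F p * (1 - 2 * (x - p)) ≤ F x)
    (h1 : 1 ≤ r₁) (h12 : r₂ - r₁ ≤ 1 / 2) (hr1 : r₁ ≤ r) (hr2 : r ≤ r₂) :
    F r ≤ F r₁ + F r₂ := by
  have hF1 := hF r₁ h1
  have hF2 := hF r₂ (by linarith)
  rcases le_or_gt p r₁ with hp1 | hp1
  · linarith [hR r₁ r hp1 hr1]
  rcases le_or_gt r₂ p with hp2 | hp2
  · linarith [hL r r₂ (by linarith) hr2 hp2]
  have hrp : F r ≤ F p := by
    rcases le_total r p with h | h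
    · exact hL r p (by linarith) h le_rfl
    · exact hR p r le_rfl h
  have hFp : 0 ≤ F p := hF p (by linarith)
  have := hTL r₁ h1 hp1.le
  have := hTR r₂ (by linarith) hp2.le
  nlinarith

lemma concave_mono_left {F : ℝ → ℝ} {a b p : ℝ} (hF : ConcaveOn ℝ (Icc a b) F)
    (hp : p ∈ Icc a b) (hmax : ∀ x ∈ Icc a b, F x ≤ F p) {x y : ℝ} (hax : a ≤ x)
    (hxy : x ≤ y) (hyp : y ≤ p) : F x ≤ F y := by
  have hx : x ∈ Icc a b := ⟨hax, (hxy.trans hyp).trans hp.2⟩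
  have := hF.min_le_of_mem_Icc hx hp ⟨hxy, hyp⟩
  rwa [min_eq_left (hmax x hx)] at this

lemma concave_anti_right {F : ℝ → ℝ} {a b p : ℝ} (hF : ConcaveOn ℝ (Icc a b) F)
    (hp : p ∈ Icc a b) (hmax : ∀ x ∈ Icc a b, F x ≤ F p) {x y : ℝ} (hpx : p ≤ x)
    (hxy : x ≤ y) (hyb : y ≤ b) : F y ≤ F x := by
  have hy : y ∈ Icc a b := ⟨(hp.1.trans hpx).trans hxy, hyb⟩
  have := hF.min_le_of_mem_Icc hp hy ⟨hpx, hxy⟩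
  rwa [min_eq_right (hmax y hy)] at this

/-- Concavity along the segment from `p` to `b`, where `F b ≥ 0` and `|b - p| ≥ 1/2`, evaluated at
the point `x` at distance `t` from `p` in the direction of `b`. -/
lemma concave_chord {F : ℝ → ℝ} {s : Set ℝ} {b p x t : ℝ} (hF : ConcaveOn ℝ s F)
    (hp : p ∈ s) (hb : b ∈ s) (hFp : 0 ≤ F p) (hFb : 0 ≤ F b) (ht0 : 0 ≤ t)
    (ht : t ≤ 1 / 2) (hbp : 1 / 2 ≤ |b - p|) (hx : x = p + t / |b - p| * (b - p)) :
    F p * (1 - 2 * t) ≤ F x := by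
  have h0 : 0 < |b - p| := by linarith
  set u := t / |b - p| with hu
  have hu0 : 0 ≤ u := by positivity
  have hu2 : u ≤ 2 * t := by
    rw [hu, div_le_iff₀ h0]; nlinarith
  have h := hF.2 hp hb (show (0 : ℝ) ≤ 1 - u by linarith) hu0 (by ring)
  simp only [smul_eq_mul] at h
  rw [show (1 - u) * p + u * b = x by rw [hx]; ring] at h
  nlinarith [mul_nonneg hu0 hFb]

lemma tent_right {F : ℝ → ℝ} {a b p : ℝ} (hF : ConcaveOn ℝ (Icc a b) F)
    (hap : a ≤ p) (hpb : p + 1 / 2 ≤ b) (h0 : ∀ x, a ≤ x → 0 ≤ F x) {x : ℝ} (hx : p ≤ x) :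
    F p * (1 - 2 * (x - p)) ≤ F x := by
  rcases le_total (x - p) (1 / 2) with h | h
  · have hab : |b - p| = b - p := abs_of_pos (by linarith)
    refine concave_chord hF ⟨hap, by linarith⟩ (b := b) ⟨by linarith, le_rfl⟩ (h0 p hap)
      (h0 b (by linarith)) (by linarith) h (by rw [hab]; linarith) ?_
    rw [hab, div_mul_cancel₀ _ (by linarith)]; ring
  · exact (mul_nonpos_of_nonneg_of_nonpos (h0 p hap) (by linarith)).trans (h0 x (by linarith))

lemma tent_left {F : ℝ → ℝ} {a b p : ℝ} (hF : ConcaveOn ℝ (Icc a b) F)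
    (hap : a + 1 / 2 ≤ p) (hpb : p ≤ b) (h0 : ∀ x, a ≤ x → 0 ≤ F x) {x : ℝ} (hx : x ≤ p)
    (hFx : 0 ≤ F x) : F p * (1 - 2 * (p - x)) ≤ F x := by
  rcases le_total (p - x) (1 / 2) with h | h
  · have hab : |a - p| = p - a := by rw [abs_of_neg (by linarith)]; ring
    refine concave_chord hF ⟨by linarith, by linarith⟩ (b := a) ⟨le_rfl, by linarith⟩
      (h0 p (by linarith)) (h0 a le_rfl) (by linarith) h (by rw [hab]; linarith) ?_
    rw [hab, ← neg_sub p a, mul_neg, div_mul_cancel₀ _ (by linarith)]; ring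
  · exact (mul_nonpos_of_nonneg_of_nonpos (h0 p (by linarith)) (by linarith)).trans hFx

lemma concave_le_of_deriv_nonpos {F : ℝ → ℝ} {s : Set ℝ} {q x f' : ℝ} (hF : ConcaveOn ℝ s F)
    (hq : q ∈ s) (hx : x ∈ s) (hqx : q ≤ x) (hf : HasDerivAt F f' q) (hf' : f' ≤ 0) :
    F x ≤ F q := by
  rcases hqx.eq_or_lt with rfl | h
  · rfl
  · have := (hF.slope_le_of_hasDerivAt hq hx h hf).trans hf'
    rw [slope_def_field, div_le_iff₀ (by linarith)] at this
    linarith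

lemma concave_le_of_deriv_nonneg {F : ℝ → ℝ} {s : Set ℝ} {q x f' : ℝ} (hF : ConcaveOn ℝ s F)
    (hq : q ∈ s) (hx : x ∈ s) (hxq : x ≤ q) (hf : HasDerivAt F f' q) (hf' : 0 ≤ f') :
    F x ≤ F q := by
  rcases hxq.eq_or_lt with rfl | h
  · rfl
  · have := hf'.trans (hF.le_slope_of_hasDerivAt hx hq h hf)
    rw [slope_def_field, le_div_iff₀ (by linarith)] at this
    linarith

/-! ### The shape inequality -/

/-- For `d ≤ 5/4` and `1 ≤ x ≤ p`, the angle `θ` decreases from `x` to `p`, so that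
`hArc d x ≥ hArc d p * (x / p)`, and `x / p ≥ 1 - 2 * (p - x)` because `p ≥ 1/2`. -/
lemma hArc_tent_left {d p x : ℝ} (hd : 0 < d) (hd2 : d ≤ 5 / 4) (hx : 1 ≤ x) (hxp : x ≤ p) :
    hArc d p * (1 - 2 * (p - x)) ≤ hArc d x := by
  have hp : 0 < p := by linarith
  have hx0 : 0 < x := by linarith
  have hle : Real.arccos ((d ^ 2 + p ^ 2 - 1) / (2 * d * p))
      ≤ Real.arccos ((d ^ 2 + x ^ 2 - 1) / (2 * d * x)) := by
    apply Real.arccos_le_arccos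
    rw [div_le_div_iff₀ (by positivity) (by positivity)]
    have h1 : 0 ≤ x * p - (d ^ 2 - 1) := by nlinarith
    nlinarith [mul_nonneg (mul_nonneg hd.le (sub_nonneg.2 hxp)) h1]
  unfold hArc
  have h0 := Real.arccos_nonneg ((d ^ 2 + p ^ 2 - 1) / (2 * d * p))
  have h1 : p * (1 - 2 * (p - x)) ≤ x := by nlinarith
  calc _ = p * (1 - 2 * (p - x)) * Real.arccos ((d ^ 2 + p ^ 2 - 1) / (2 * d * p)) := by ring
    _ ≤ x * Real.arccos ((d ^ 2 + p ^ 2 - 1) / (2 * d * p)) := by gcongr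
    _ ≤ _ := by gcongr

lemma hArc_shape {d r₁ r₂ r : ℝ} (hd : 0 < d) (h1 : 1 ≤ r₁) (h12 : r₂ - r₁ ≤ 1 / 2)
    (hr1 : r₁ ≤ r) (hr2 : r ≤ r₂) : hArc d r ≤ hArc d r₁ + hArc d r₂ := by
  have hpos : ∀ x, 1 ≤ x → 0 ≤ hArc d x := fun x hx => hArc_nonneg (by linarith)
  rcases le_total d (5 / 4) with h54 | h54
  · have hC := concaveOn_hArc (a := 1) hd one_pos (abs_le.2 ⟨by linarith, by linarith⟩)
      (Or.inl le_rfl)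
    -- Beyond `q` the function decreases; `q > 1` only if `q` is at distance `1/2` from `d + 1`.
    obtain ⟨q, hq1, hqb, hqD, hqd⟩ : ∃ q, 1 ≤ q ∧ q < d + 1 ∧ hArcD d q ≤ 0 ∧
        (1 < q → q + 1 / 2 ≤ d + 1) := by
      rcases le_total d (1 / 2) with h | h
      · exact ⟨1, le_rfl, by linarith, hArcD_one_nonpos hd h, fun h => absurd h (lt_irrefl _)⟩
      · exact ⟨d + 1 / 2, by linarith, by linarith, hArcD_nonpos h, fun _ => by linarith⟩
    have hqder := hasDerivAt_hArc hd (abs_lt.2 ⟨by linarith, by linarith⟩) hqb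
    obtain ⟨p, hp, hpmax⟩ := isCompact_Icc.exists_isMaxOn (nonempty_Icc.2 hq1)
      ((continuousOn_hArc hd).mono fun x (hx : x ∈ Icc 1 q) => one_pos.trans_le hx.1)
    have hpI : p ∈ Icc 1 (d + 1) := ⟨hp.1, hp.2.trans hqb.le⟩
    have hmax : ∀ x ∈ Icc 1 (d + 1), hArc d x ≤ hArc d p := fun x hx => by
      rcases le_total x q with h | h
      · exact hpmax ⟨hx.1, h⟩
      · exact (concave_le_of_deriv_nonpos hC ⟨hq1, hqb.le⟩ hx h hqder hqD).trans
          (hpmax ⟨hq1, le_rfl⟩)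
    refine le_add_of_tent (p := p) hpos
      (fun x y hx hxy hy => concave_mono_left hC hpI hmax hx hxy hy) (fun x y hx hxy => ?_)
      (fun x hx hxp => hArc_tent_left hd h54 hx hxp)
      (fun x h1p hx => tent_right hC hp.1 ?_ hpos hx) h1 h12 hr1 hr2
    · rcases le_total y (d + 1) with h | h
      · exact concave_anti_right hC hpI hmax hx hxy h
      · rw [hArc_eq_zero hd (by linarith) (Or.inl h)]
        exact hpos x (hp.1.trans hx)
    · linarith [hqd (h1p.trans_le hp.2), hp.2]
  · have hpos' : ∀ x, d - 1 ≤ x → 0 ≤ hArc d x := fun x hx => hArc_nonneg (by linarith)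
    have hC := concaveOn_hArc (a := d - 1) hd (by linarith) (abs_of_pos (by linarith)).le
      (Or.inr (by linarith))
    have habs : |d - 1| = d - 1 := abs_of_pos (by linarith)
    have hder1 := hasDerivAt_hArc hd (r := d - 1 / 2) (by rw [habs]; linarith) (by linarith)
    have hder2 := hasDerivAt_hArc hd (r := d + 1 / 2) (by rw [habs]; linarith) (by linarith)
    have hle : d - 1 / 2 ≤ d + 1 / 2 := by linarith
    obtain ⟨p, hp, hpmax⟩ := isCompact_Icc.exists_isMaxOn (nonempty_Icc.2 hle)
      ((continuousOn_hArc hd).mono fun x (hx : x ∈ Icc (d - 1 / 2) (d + 1 / 2)) =>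
        show (0 : ℝ) < x by linarith [hx.1])
    have hpI : p ∈ Icc (d - 1) (d + 1) := ⟨by linarith [hp.1], by linarith [hp.2]⟩
    have hmax : ∀ x ∈ Icc (d - 1) (d + 1), hArc d x ≤ hArc d p := fun x hx => by
      rcases le_total x (d + 1 / 2) with h | h
      · rcases le_total x (d - 1 / 2) with h' | h'
        · exact (concave_le_of_deriv_nonneg hC ⟨by linarith, by linarith⟩ hx h' hder1
            (hArcD_nonneg h54)).trans (hpmax ⟨le_rfl, hle⟩)
        · exact hpmax ⟨h', h⟩
      · exact (concave_le_of_deriv_nonpos hC ⟨by linarith, by linarith⟩ hx h hder2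
            (hArcD_nonpos (by linarith))).trans (hpmax ⟨hle, le_rfl⟩)
    refine le_add_of_tent (p := p) hpos
      (fun x y hx hxy hy => ?_) (fun x y hx hxy => ?_)
      (fun x hx hxp => tent_left hC (by linarith [hp.1]) hpI.2 hpos' hxp (hpos x hx))
      (fun x _ hx => tent_right hC hpI.1 (by linarith [hp.2]) hpos' hx) h1 h12 hr1 hr2
    · rcases le_total x (d - 1) with h | h
      · rw [hArc_eq_zero hd (by linarith) (Or.inr h)]
        exact hpos y (hx.trans hxy)
      · exact concave_mono_left hC hpI hmax h hxy hy
    · rcases le_total y (d + 1) with h | h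
      · exact concave_anti_right hC hpI hmax hx hxy h
      · rw [hArc_eq_zero hd (by linarith) (Or.inl h)]
        exact hpos' x (hpI.1.trans hx)

lemma profile_eq_hArc {R d r : ℝ} (hR : 0 < R) (hd : 0 < d) (hr : R ≤ r) :
    profile R d r = 2 / (π * R) * hArc (d / R) (r / R) := by
  have hr0 : 0 < r := hR.trans_le hr
  rw [profile, if_neg (by linarith)]
  split_ifs with h
  · rw [hArc_eq_zero (by positivity) (by positivity), mul_zero]
    rcases h with h | h
    · left; rw [div_add_one hR.ne']; gcongr; linarith
    · right; rw [div_sub_one hR.ne']; gcongr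
  · have : ((d / R) ^ 2 + (r / R) ^ 2 - 1) / (2 * (d / R) * (r / R))
        = (d ^ 2 + r ^ 2 - R ^ 2) / (2 * d * r) := by field_simp
    rw [hArc, this]
    field_simp

lemma profile_nonneg {R d r : ℝ} (hr : 0 ≤ r) : 0 ≤ profile R d r := by
  unfold profile
  split_ifs
  · positivity
  · exact le_rfl
  · exact mul_nonneg (by positivity) (Real.arccos_nonneg _)

/-- The one-particle case. For `d = 0` the profile vanishes for `r > R`, so only `r = r₁ = R`
matters. -/
lemma profile_shape {R d r₁ r₂ r : ℝ} (hR : 0 < R) (hd : 0 ≤ d) (h₁ : R ≤ r₁)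
    (h₂ : r₂ - r₁ ≤ R / 2) (hr : r ∈ Set.Icc r₁ r₂) :
    profile R d r ≤ profile R d r₁ + profile R d r₂ := by
  have hr1 := hr.1
  have hr2 := hr.2
  rcases hd.eq_or_lt with rfl | hd
  · have p1 : 0 ≤ profile R 0 r₁ := profile_nonneg (by linarith)
    have p2 : 0 ≤ profile R 0 r₂ := profile_nonneg (by linarith)
    rcases (h₁.trans hr1).eq_or_lt with h | h
    · obtain rfl : r₁ = r := by linarith
      linarith
    · have : profile R 0 r = 0 := by
        rw [profile, if_neg (by linarith), if_pos (Or.inl (by linarith))]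
      linarith
  · rw [profile_eq_hArc hR hd h₁, profile_eq_hArc hR hd (h₁.trans hr1),
      profile_eq_hArc hR hd (h₁.trans (hr1.trans hr2)), ← mul_add]
    refine mul_le_mul_of_nonneg_left (hArc_shape (by positivity) ?_ ?_ ?_ ?_) (by positivity)
    · rwa [one_le_div hR]
    · rw [← sub_div, div_le_iff₀ hR]; linarith
    · gcongr
    · gcongr

/-- **Shape lemma** (Lemma 4.7).  With `𝒩'(r) = Σ_l f(|y_l|, r)` the a.e. derivative of
the particle counting function: if `r₁ ≥ R`, `r₂ - r₁ ≤ R/2` and `r ∈ [r₁, r₂]`, then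
`𝒩'(r₁) + 𝒩'(r₂) ≥ 𝒩'(r)`. -/
theorem shape_lemma
    (R : ℝ) (hR : 0 < R) (m : ℕ) (y : Fin m → Plane)
    (r₁ r₂ r : ℝ) (h₁ : R ≤ r₁) (h₂ : r₂ - r₁ ≤ R / 2) (hr : r ∈ Set.Icc r₁ r₂) :
    (∑ l : Fin m, profile R ‖y l‖ r)
      ≤ (∑ l : Fin m, profile R ‖y l‖ r₁) + ∑ l : Fin m, profile R ‖y l‖ r₂ := by
  rw [← Finset.sum_add_distrib]
  exact Finset.sum_le_sum fun l _ => profile_shape hR (norm_nonneg _) h₁ h₂ hr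
end
end
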